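/- arXiv:1911.08951 — 14 statements merged into one kernel-verified Lean document; each statement's English description precedes it below -/
import Mathlib

section
/- If a group G admits a right-invariant finitely additive probability measure and H is a subgroup of G, then H admits a right-invariant finitely additive probability measure. -/
/-- A right-invariant finitely additive probability measure on a group `G`. -/
def IsRightInvariantFAPM {G : Type*} [Group G] (μ : Set G → ℝ) : Prop :=
  (∀ X : Set G, 0 ≤ μ X ∧ μ X ≤ 1) ∧
  μ Set.univ = 1 ∧
  (∀ X Y : Set G, Disjoint X Y → μ (X ∪ Y) = μ X + μ Y) ∧
  ∀ (X : Set G) (g : G), μ ((· * g) '' X) = μ X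

/-- If `G` admits a right-invariant finitely additive probability measure and `H ≤ G`,
then `H` admits a right-invariant finitely additive probability measure. -/
theorem subgroup_amenable_of_amenable {G : Type*} [Group G]
    (hG : ∃ μ : Set G → ℝ, IsRightInvariantFAPM μ) (H : Subgroup G) :
    ∃ ν : Set H → ℝ, IsRightInvariantFAPM ν := by
  obtain ⟨μ, h01, h1, hadd, hinv⟩ := hG
  let f : G → H := fun g =>
    ⟨(Quotient.out (g : G ⧸ H))⁻¹ * g, QuotientGroup.eq.mp (QuotientGroup.out_eq' (g : G ⧸ H))⟩
  have hf : ∀ (g : G) (h : H), f (g * h) = f g * h := by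
    intro g h
    have e : ((g * (h : G) : G) : G ⧸ H) = (g : G ⧸ H) :=
      QuotientGroup.mk_mul_of_mem g h.2
    apply Subtype.ext
    simp only [f, e, Subgroup.coe_mul, mul_assoc]
  refine ⟨fun X => μ (f ⁻¹' X), fun X => h01 _, h1, ?_, ?_⟩
  · intro X Y hXY
    exact hadd _ _ (hXY.preimage f)
  · intro X h
    have e : f ⁻¹' ((· * h) '' X) = (· * (h : G)) '' (f ⁻¹' X) := by
      ext g
      constructor
      · rintro ⟨x, hx, hxg⟩
        refine ⟨g * ((h⁻¹ : H) : G), ?_, by simp⟩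
        change f (g * ((h⁻¹ : H) : G)) ∈ X
        rw [hf, ← hxg]
        simpa using hx
      · rintro ⟨g, hg, rfl⟩
        exact ⟨f g, hg, (hf g h).symm⟩
    change μ (f ⁻¹' ((· * h) '' X)) = μ (f ⁻¹' X)
    rw [e, hinv]
end

section
/- Let N be a normal subgroup of a group G. If both N and the quotient group G/N admit right-invariant finitely additive probability measures, then G admits a right-invariant finitely additive probability measure. -/
open MeasureTheory Filter Topology in
theorem exists_integral_aux {Q : Type*} [Group Q] (ν : Set Q → ℝ) (hν : IsRightInvariantFAPM ν) :
    ∃ I : (Q → ℝ) → ℝ,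
      (∀ f, 0 ≤ I f ∧ I f ≤ 1) ∧ I (fun _ => 1) = 1 ∧
      (∀ f g : Q → ℝ, (∀ q, 0 ≤ f q) → (∀ q, 0 ≤ g q) → (∀ q, f q + g q ≤ 1) →
        I (fun q => f q + g q) = I f + I g) ∧
      ∀ (f : Q → ℝ) (h : Q), I (fun q => f (q * h)) = I f := by
  obtain ⟨h01, huniv, hadd, hinv⟩ := hν
  letI : MeasurableSpace Q := ⊤
  let T : Set Q → ℝ →L[ℝ] ℝ := fun A => ν A • ContinuousLinearMap.id ℝ ℝ
  have hT : FinMeasAdditive (0 : Measure Q) T := by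
    intro s t _ _ _ _ hst
    simp only [T]
    rw [hadd s t hst, add_smul]
  have hTn : ∀ s, MeasurableSet s → (0 : Measure Q) s < ⊤ → ∀ x : ℝ, 0 ≤ x → 0 ≤ T s x := by
    intro s _ _ x hx
    simpa [T] using mul_nonneg (h01 s).1 hx
  let J : SimpleFunc Q ℝ → ℝ := fun s => SimpleFunc.setToSimpleFunc T s
  have hint : ∀ s : SimpleFunc Q ℝ, Integrable s (0 : Measure Q) := fun s =>
    integrable_zero_measure
  have Jadd : ∀ s t, J (s + t) = J s + J t := fun s t =>
    SimpleFunc.setToSimpleFunc_add T hT (hint s) (hint t)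
  have Jmono : ∀ s t : SimpleFunc Q ℝ, s ≤ t → J s ≤ J t := fun s t h =>
    SimpleFunc.setToSimpleFunc_mono hT hTn (hint s) (hint t) h
  have Jconst : ∀ c : ℝ, J (SimpleFunc.const Q c) = c := by
    intro c
    simp only [J]
    rw [SimpleFunc.setToSimpleFunc_const']
    simp [T, huniv]
  let r : ℕ → ℝ → ℝ := fun n x => (⌊((n : ℝ) + 1) * max 0 (min 1 x)⌋₊ : ℝ) / ((n : ℝ) + 1)
  have r0 : ∀ n x, 0 ≤ r n x := fun n x => by positivity
  have rle : ∀ n x, r n x ≤ max 0 (min 1 x) := by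
    intro n x
    simp only [r]
    rw [div_le_iff₀ (by positivity), mul_comm]
    exact Nat.floor_le (by positivity)
  have rge : ∀ n x, max 0 (min 1 x) ≤ r n x + 1 / ((n : ℝ) + 1) := by
    intro n x
    simp only [r]
    rw [← add_div, le_div_iff₀ (by positivity), mul_comm]
    exact (Nat.lt_floor_add_one _).le
  have r1 : ∀ n x, r n x ≤ 1 := fun n x => (rle n x).trans (by simp)
  let S : ℕ → (Q → ℝ) → SimpleFunc Q ℝ := fun n f =>
    { toFun := fun q => r n (f q)
      measurableSet_fiber' := fun _ => trivial
      finite_range' := by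
        refine Set.Finite.subset
          ((Set.finite_Iic (n + 1)).image (fun k : ℕ => (k : ℝ) / ((n : ℝ) + 1))) ?_
        rintro _ ⟨q, rfl⟩
        refine ⟨⌊((n : ℝ) + 1) * max 0 (min 1 (f q))⌋₊, ?_, rfl⟩
        refine Nat.floor_le_of_le ?_
        push_cast
        have : max 0 (min 1 (f q)) ≤ 1 := by simp
        have hn : (0 : ℝ) ≤ (n : ℝ) + 1 := by positivity
        nlinarith }
  have Sapp : ∀ n f q, S n f q = r n (f q) := fun _ _ _ => rfl
  have JS0 : ∀ n f, 0 ≤ J (S n f) := by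
    intro n f
    rw [← Jconst 0]
    exact Jmono _ _ fun q => r0 n (f q)
  have JS1 : ∀ n f, J (S n f) ≤ 1 := by
    intro n f
    conv_rhs => rw [← Jconst 1]
    exact Jmono _ _ fun q => r1 n (f q)
  have hlim : ∀ f, ∃ x ∈ Set.Icc (0 : ℝ) 1,
      Tendsto (fun n => J (S n f)) (hyperfilter ℕ : Filter ℕ) (𝓝 x) := by
    intro f
    have := isCompact_Icc.ultrafilter_le_nhds (s := Set.Icc (0 : ℝ) 1)
      ((hyperfilter ℕ).map (fun n => J (S n f)))
      (by
        rw [le_principal_iff]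
        exact Filter.mem_map.2 (Filter.univ_mem' (fun n => ⟨JS0 n f, JS1 n f⟩)))
    exact this
  choose I hI hIlim using hlim
  have hz : Tendsto (fun n : ℕ => 1 / ((n : ℝ) + 1)) (hyperfilter ℕ : Filter ℕ) (𝓝 0) :=
    tendsto_one_div_add_atTop_nhds_zero_nat.mono_left Nat.hyperfilter_le_atTop
  refine ⟨I, fun f => hI f, ?_, ?_, ?_⟩
  · refine tendsto_nhds_unique (hIlim _) ?_
    have : ∀ n, J (S n (fun _ => 1)) = 1 := by
      intro n
      refine Eq.trans ?_ (Jconst 1)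
      congr 1
      ext q
      rw [Sapp]
      have hfl : ⌊(n : ℝ) + 1⌋₊ = n + 1 := by
        exact_mod_cast Nat.floor_natCast (R := ℝ) (n + 1)
      have hne : (n : ℝ) + 1 ≠ 0 := by positivity
      simp [r, hfl, hne]
    simp only [this]
    exact tendsto_const_nhds
  · intro f g hf hg hfg
    have key := ((hIlim (fun q => f q + g q)).sub ((hIlim f).add (hIlim g)))
    have hcl : ∀ x : ℝ, 0 ≤ x → x ≤ 1 → max 0 (min 1 x) = x := by
      intro x h0 h1
      rw [min_eq_right h1, max_eq_right h0]
    have hr : ∀ n (x : ℝ), 0 ≤ x → x ≤ 1 → r n x ≤ x ∧ x ≤ r n x + 1 / ((n : ℝ) + 1) := by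
      intro n x h0 h1
      have a := rle n x
      have b := rge n x
      rw [hcl x h0 h1] at a b
      exact ⟨a, b⟩
    have up : ∀ n : ℕ, J (S n (fun q => f q + g q)) - (J (S n f) + J (S n g))
        ≤ 1 / ((n : ℝ) + 1) + 1 / ((n : ℝ) + 1) := by
      intro n
      have := Jmono (S n (fun q => f q + g q))
        (S n f + S n g + SimpleFunc.const Q (1 / ((n : ℝ) + 1) + 1 / ((n : ℝ) + 1))) (by
          intro q
          change r n (f q + g q) ≤ r n (f q) + r n (g q) + (1 / ((n : ℝ) + 1) + 1 / ((n : ℝ) + 1))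
          have a := hr n (f q) (hf q) (by linarith [hg q, hfg q])
          have b := hr n (g q) (hg q) (by linarith [hf q, hfg q])
          have c := hr n (f q + g q) (by linarith [hf q, hg q]) (hfg q)
          linarith [a.2, b.2, c.1])
      rw [Jadd, Jadd, Jconst] at this
      linarith
    have lo : ∀ n : ℕ, -(1 / ((n : ℝ) + 1)) ≤
        J (S n (fun q => f q + g q)) - (J (S n f) + J (S n g)) := by
      intro n
      have := Jmono (S n f + S n g)
        (S n (fun q => f q + g q) + SimpleFunc.const Q (1 / ((n : ℝ) + 1))) (by
          intro q
          change r n (f q) + r n (g q) ≤ r n (f q + g q) + (1 / ((n : ℝ) + 1))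
          have a := hr n (f q) (hf q) (by linarith [hg q, hfg q])
          have b := hr n (g q) (hg q) (by linarith [hf q, hfg q])
          have c := hr n (f q + g q) (by linarith [hf q, hg q]) (hfg q)
          linarith [a.1, b.1, c.2])
      rw [Jadd, Jadd, Jconst] at this
      linarith
    have e1 := le_of_tendsto_of_tendsto' key (hz.add hz) up
    have e2 := le_of_tendsto_of_tendsto' hz.neg key lo
    linarith
  · intro f h
    refine tendsto_nhds_unique (hIlim _) ?_
    have : ∀ n, J (S n (fun q => f (q * h))) = J (S n f) := by
      intro n
      have hrange : (S n (fun q => f (q * h))).range = (S n f).range := by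
        ext y
        simp only [SimpleFunc.mem_range, Set.mem_range, Sapp]
        constructor
        · rintro ⟨q, hq⟩
          exact ⟨q * h, hq⟩
        · rintro ⟨q, hq⟩
          exact ⟨q * h⁻¹, by simpa using hq⟩
      simp only [J, SimpleFunc.setToSimpleFunc, hrange]
      refine Finset.sum_congr rfl fun x _ => ?_
      have : ν (S n (fun q => f (q * h)) ⁻¹' {x}) = ν (S n f ⁻¹' {x}) := by
        rw [← hinv (S n (fun q => f (q * h)) ⁻¹' {x}) h]
        congr 1
        ext q
        simp only [Set.mem_image, Set.mem_preimage, Set.mem_singleton_iff, Sapp]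
        constructor
        · rintro ⟨p, hp, rfl⟩
          exact hp
        · intro hq
          exact ⟨q * h⁻¹, by simpa using hq, by simp⟩
      simp only [T, this]
    simp only [this]
    exact hIlim f

/-- If both `N ⊴ G` and `G/N` admit right-invariant finitely additive probability measures,
then so does `G`. -/
theorem amenable_of_normal_and_quotient_amenable {G : Type*} [Group G]
    (N : Subgroup G) [N.Normal]
    (hN : ∃ μ : Set N → ℝ, IsRightInvariantFAPM μ)
    (hQ : ∃ μ : Set (G ⧸ N) → ℝ, IsRightInvariantFAPM μ) :
    ∃ μ : Set G → ℝ, IsRightInvariantFAPM μ := by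
  obtain ⟨μ, h01, huniv, hadd, hinv⟩ := hN
  obtain ⟨ν, hν⟩ := hQ
  obtain ⟨I, I01, I1, Iadd, Iinv⟩ := exists_integral_aux ν hν
  let F : Set G → G → ℝ := fun X g => μ {n : N | (n : G) * g ∈ X}
  have hF : ∀ (X : Set G) (a b : G), (a : G ⧸ N) = b → F X a = F X b := by
    intro X a b hab
    have hm : b * a⁻¹ ∈ N := (Subgroup.Normal.mem_comm_iff inferInstance).1 (QuotientGroup.eq.1 hab)
    simp only [F]
    rw [← hinv {n : N | (n : G) * b ∈ X} ⟨b * a⁻¹, hm⟩]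
    congr 1
    ext n
    simp only [Set.mem_image, Set.mem_setOf_eq]
    constructor
    · intro hn
      exact ⟨n * ⟨b * a⁻¹, hm⟩⁻¹, by simpa [mul_assoc] using hn, by simp⟩
    · rintro ⟨p, hp, rfl⟩
      simpa [mul_assoc] using hp
  refine ⟨fun X => I (fun q => F X q.out), fun X => I01 _, ?_, ?_, ?_⟩
  · simp only [F, Set.mem_univ, Set.setOf_true, huniv, I1]
  · intro X Y hXY
    have hs : ∀ g, F (X ∪ Y) g = F X g + F Y g := by
      intro g
      simp only [F]
      rw [← hadd]
      · rfl
      · rw [Set.disjoint_left] at hXY ⊢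
        intro n hn hn'
        exact hXY hn hn'
    simp only [hs]
    refine Iadd _ _ (fun q => (h01 _).1) (fun q => (h01 _).1) fun q => ?_
    rw [← hs]
    exact (h01 _).2
  · intro X g
    change I _ = I _
    rw [← Iinv (fun q => F X q.out) ((g⁻¹ : G) : G ⧸ N)]
    congr 1
    funext q
    have h1 : F ((· * g) '' X) q.out = F X (q.out * g⁻¹) := by
      simp only [F]
      congr 1
      ext n
      simp only [Set.mem_image, Set.mem_setOf_eq]
      constructor
      · rintro ⟨x, hx, hxe⟩
        rw [← mul_assoc, ← hxe]
        simpa using hx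
      · intro h
        exact ⟨_, h, by simp [mul_assoc]⟩
    rw [h1]
    apply hF
    simp
end

section
/- If every finitely generated subgroup of a group G admits a right-invariant finitely additive probability measure, then G itself admits a right-invariant finitely additive probability measure. -/
/-- If every finitely generated subgroup of `G` admits a right-invariant finitely additive
probability measure, then so does `G`. -/
theorem amenable_of_fg_subgroups_amenable {G : Type*} [Group G]
    (h : ∀ H : Subgroup G, H.FG → ∃ μ : Set H → ℝ, IsRightInvariantFAPM μ) :
    ∃ μ : Set G → ℝ, IsRightInvariantFAPM μ := by
  classical
  have hF : ∀ F : Finset G, ∃ μ : Set (Subgroup.closure (F : Set G)) → ℝ,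
      IsRightInvariantFAPM μ := fun F => h _ ⟨F, rfl⟩
  choose m hm using hF
  let ν : Finset G → Set G → ℝ := fun F X => m F (Subtype.val ⁻¹' X)
  let U : Ultrafilter (Finset G) := Ultrafilter.of Filter.atTop
  have hU : (U : Filter (Finset G)) ≤ Filter.atTop := Ultrafilter.of_le _
  have hlim : ∀ X : Set G, ∃ a ∈ Set.Icc (0 : ℝ) 1,
      Filter.Tendsto (fun F => ν F X) U (nhds a) := by
    intro X
    have hc : IsCompact (Set.Icc (0 : ℝ) 1) := isCompact_Icc
    have := hc.ultrafilter_le_nhds (U.map (fun F => ν F X)) (by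
      rw [Filter.le_principal_iff]
      exact Filter.mem_map.2 (Filter.Eventually.of_forall fun F => (hm F).1 _))
    exact this
  choose μ hμ hT using hlim
  refine ⟨μ, hμ, ?_, ?_, ?_⟩
  · refine tendsto_nhds_unique (hT Set.univ) ?_
    have : (fun F => ν F Set.univ) = fun _ => (1 : ℝ) := by
      funext F
      simpa [ν] using (hm F).2.1
    rw [this]
    exact tendsto_const_nhds
  · intro X Y hXY
    refine tendsto_nhds_unique (hT (X ∪ Y)) ?_
    have : (fun F => ν F (X ∪ Y)) = fun F => ν F X + ν F Y := by
      funext F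
      exact (hm F).2.2.1 _ _ (hXY.preimage _)
    rw [this]
    exact (hT X).add (hT Y)
  · intro X g
    refine tendsto_nhds_unique (hT _) ((hT X).congr' ?_)
    have hev : ∀ᶠ F in (U : Filter (Finset G)), ({g} : Finset G) ≤ F :=
      hU (Filter.eventually_ge_atTop _)
    filter_upwards [hev] with F hgF
    have hg : g ∈ Subgroup.closure (F : Set G) :=
      Subgroup.subset_closure (hgF (Finset.mem_singleton_self g))
    change m F _ = m F _
    rw [← (hm F).2.2.2 (Subtype.val ⁻¹' X) ⟨g, hg⟩]
    congr 1
    ext ⟨y, hy⟩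
    constructor
    · rintro ⟨x, hx, hxy⟩
      exact ⟨x, hx, congrArg Subtype.val hxy⟩
    · rintro ⟨x, hx, hxy⟩
      have hxy' : x * g = y := hxy
      have hxm : x ∈ Subgroup.closure (F : Set G) := by
        rw [← hxy'] at hy
        exact (Subgroup.mul_mem_cancel_right _ hg).1 hy
      exact ⟨⟨x, hxm⟩, hx, Subtype.ext hxy'⟩
end

section
/- If a group G satisfies the Følner condition, then G admits a right-invariant finitely additive probability measure; that is, G is amenable. -/
open scoped Classical

/-- A group `G` satisfies the Følner condition if for every finite `X ⊆ G` and `ε > 0`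
there is a finite nonempty `F ⊆ G` with `|F \ Fg| / |F| < ε` for all `g ∈ X`. -/
def FolnerCondition (G : Type*) [Group G] : Prop :=
  ∀ (X : Finset G) (ε : ℝ), 0 < ε → ∃ F : Finset G, F.Nonempty ∧
    ∀ g ∈ X, ((F \ F.image (· * g)).card : ℝ) / (F.card : ℝ) < ε

/-- If `G` satisfies the Følner condition, then `G` admits a right-invariant finitely
additive probability measure, i.e. `G` is amenable. -/
theorem amenable_of_folnerCondition {G : Type*} [Group G] (h : FolnerCondition G) :
    ∃ μ : Set G → ℝ, IsRightInvariantFAPM μ := by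
  choose F hF hFg using fun i : Finset G × ℕ => h i.1 (1 / ((i.2 : ℝ) + 1)) (by positivity)
  have hpos : ∀ i, (0 : ℝ) < ((F i).card : ℝ) := fun i => by
    exact_mod_cast (hF i).card_pos
  let m : Set G → Finset G × ℕ → ℝ := fun X i =>
    (((F i).filter (· ∈ X)).card : ℝ) / ((F i).card : ℝ)
  let U : Ultrafilter (Finset G × ℕ) := Ultrafilter.of Filter.atTop
  have hU : (U : Filter (Finset G × ℕ)) ≤ Filter.atTop := Ultrafilter.of_le _
  have hm : ∀ X i, m X i ∈ Set.Icc (0 : ℝ) 1 := fun X i => by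
    refine ⟨by positivity, ?_⟩
    refine (div_le_one (hpos i)).2 ?_
    exact_mod_cast Finset.card_filter_le _ _
  have hlim : ∀ X, ∃ x ∈ Set.Icc (0 : ℝ) 1, Filter.Tendsto (m X) U (nhds x) := fun X => by
    have := isCompact_iff_ultrafilter_le_nhds.1 (isCompact_Icc (a := (0 : ℝ)) (b := 1))
      (U.map (m X)) (by
        rw [Filter.le_principal_iff]
        exact Filter.Eventually.of_forall (f := (U : Filter _)) (hm X))
    exact this
  choose μ hμ hT using hlim
  have hle : ∀ (X : Set G) (g : G), μ ((· * g) '' X) ≤ μ X := by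
    intro X g
    have hε : Filter.Tendsto (fun i : Finset G × ℕ => 1 / ((i.2 : ℝ) + 1)) U (nhds 0) := by
      have h1 : Filter.Tendsto (fun i : Finset G × ℕ => i.2) Filter.atTop Filter.atTop := by
        rw [← Filter.prod_atTop_atTop_eq]; exact Filter.tendsto_snd
      exact (tendsto_one_div_add_atTop_nhds_zero_nat.comp h1).mono_left hU
    have hs := (hT X).add hε
    rw [add_zero] at hs
    refine le_of_tendsto_of_tendsto (hT _) hs ?_
    have hev : ∀ᶠ i : Finset G × ℕ in (U : Filter _), ({g}, 0) ≤ i :=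
      hU (Filter.eventually_ge_atTop _)
    filter_upwards [hev] with i hi
    have hgi : g ∈ i.1 := hi.1 (Finset.mem_singleton_self g)
    have h2 := hFg i g hgi
    have hsub : (F i).filter (· ∈ (· * g) '' X) ⊆
        ((F i).filter (· ∈ X)).image (· * g) ∪ (F i \ (F i).image (· * g)) := by
      intro y hy
      rw [Finset.mem_filter] at hy
      obtain ⟨hy, x, hx, rfl⟩ := hy
      by_cases hxF : x ∈ F i
      · exact Finset.mem_union_left _
          (Finset.mem_image_of_mem _ (Finset.mem_filter.2 ⟨hxF, hx⟩))
      · refine Finset.mem_union_right _ (Finset.mem_sdiff.2 ⟨hy, fun hh => ?_⟩)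
        obtain ⟨z, hz, hzx⟩ := Finset.mem_image.1 hh
        exact hxF (mul_right_cancel hzx ▸ hz)
    have hc : ((F i).filter (· ∈ (· * g) '' X)).card ≤
        ((F i).filter (· ∈ X)).card + (F i \ (F i).image (· * g)).card :=
      (Finset.card_le_card hsub).trans ((Finset.card_union_le _ _).trans
        (Nat.add_le_add_right Finset.card_image_le _))
    have hc' : (((F i).filter (· ∈ (· * g) '' X)).card : ℝ) ≤
        ((F i).filter (· ∈ X)).card + (F i \ (F i).image (· * g)).card := by exact_mod_cast hc
    have h3 := div_le_div_of_nonneg_right hc' (hpos i).le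
    rw [add_div] at h3
    exact h3.trans (add_le_add le_rfl h2.le)
  refine ⟨μ, hμ, ?_, ?_, ?_⟩
  · refine tendsto_nhds_unique (hT _) ?_
    have : m Set.univ = fun _ => 1 := by
      funext i
      simp [m, (hF i).ne_empty]
    rw [this]
    exact tendsto_const_nhds
  · intro X Y hXY
    refine tendsto_nhds_unique (hT _) ?_
    have : m (X ∪ Y) = fun i => m X i + m Y i := by
      funext i
      simp only [m]
      rw [← add_div, ← Nat.cast_add, ← Finset.card_union_of_disjoint, ← Finset.filter_or]
      · simp only [Set.mem_union]
      · exact Finset.disjoint_filter.2 fun x _ hx hy => Set.disjoint_left.1 hXY hx hy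
    rw [this]
    exact (hT X).add (hT Y)
  · intro X g
    refine le_antisymm (hle X g) ?_
    have := hle ((· * g) '' X) g⁻¹
    rw [Set.image_image] at this
    simpa using this
end

section
/- A countable group G has a Følner sequence if and only if G has a Følner exhaustion, i.e. a Følner sequence (F_n)_{n∈ℕ} with 1 ∈ F_1 ⊆ F_2 ⊆ ⋯ and G = ⋃_{n∈ℕ} F_n. -/
open scoped Classical

/-- A Følner sequence in `G`: a sequence `(F_n)` of finite nonempty subsets of `G` with
`lim_{n→∞} |F_n \ F_n g| / |F_n| = 0` for every `g ∈ G`. -/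
def IsFolnerSequence {G : Type*} [Group G] (F : ℕ → Finset G) : Prop :=
  (∀ n, (F n).Nonempty) ∧
  ∀ g : G, Filter.Tendsto
    (fun n => (((F n) \ (F n).image (· * g)).card : ℝ) / ((F n).card : ℝ))
    Filter.atTop (nhds 0)

lemma folner_card_tendsto {G : Type*} [Group G] [Infinite G] (F : ℕ → Finset G)
    (hF : IsFolnerSequence F) (N : ℕ) : ∀ᶠ n in Filter.atTop, N ≤ (F n).card := by
  obtain ⟨S, hS⟩ := Infinite.exists_subset_card_eq G N
  rcases Nat.eq_zero_or_pos N with h0 | hN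
  · simp [h0]
  have hNr : (0 : ℝ) < N := by exact_mod_cast hN
  have hev : ∀ᶠ n in Filter.atTop, ∀ g ∈ S,
      (((F n) \ (F n).image (· * g)).card : ℝ) / ((F n).card : ℝ) < 1 / N := by
    rw [Filter.eventually_all_finset]
    intro g _
    exact (hF.2 g).eventually_lt_const (by positivity)
  filter_upwards [hev] with n hn
  by_contra! hlt
  have hpos : 0 < (F n).card := (hF.1 n).card_pos
  have hposr : (0 : ℝ) < (F n).card := by exact_mod_cast hpos
  have hltr : ((F n).card : ℝ) < N := by exact_mod_cast hlt
  have key : ∀ g ∈ S, F n ⊆ (F n).image (· * g) := by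
    intro g hg
    have h := hn g hg
    rw [div_lt_div_iff₀ hposr hNr] at h
    rw [← Finset.sdiff_eq_empty_iff_subset, ← Finset.card_eq_zero]
    by_contra hne
    have h1 : (1 : ℝ) ≤ ((F n) \ (F n).image (· * g)).card := by
      exact_mod_cast Nat.one_le_iff_ne_zero.mpr hne
    nlinarith
  obtain ⟨f, hf⟩ := hF.1 n
  have hsub : S.image (fun g => f * g⁻¹) ⊆ F n := by
    intro x hx
    obtain ⟨g, hg, rfl⟩ := Finset.mem_image.mp hx
    obtain ⟨y, hy, hyf⟩ := Finset.mem_image.mp (key g hg hf)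
    have : f * g⁻¹ = y := by rw [← hyf]; simp
    rwa [this]
  have := Finset.card_le_card hsub
  rw [Finset.card_image_of_injective _ (fun a b h => by simpa using h), hS] at this
  omega

lemma folner_key {G : Type*} [Group G] (F : ℕ → Finset G)
    (hF : IsFolnerSequence F) (ε : ℝ) (hε : 0 < ε) (K A : Finset G) :
    ∃ E : Finset G, A ⊆ E ∧ ∀ g ∈ K,
      ((E \ E.image (· * g)).card : ℝ) / (E.card : ℝ) ≤ ε := by
  rcases finite_or_infinite G with hfin | hinf
  · have := Fintype.ofFinite G
    refine ⟨Finset.univ, Finset.subset_univ _, fun g _ => ?_⟩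
    rw [Finset.image_univ_of_surjective (mul_right_surjective g)]
    simpa using hε.le
  have hev : ∀ᶠ n in Filter.atTop, ∀ g ∈ K,
      (((F n) \ (F n).image (· * g)).card : ℝ) / ((F n).card : ℝ) < ε / 2 := by
    rw [Filter.eventually_all_finset]
    intro g _
    exact (hF.2 g).eventually_lt_const (by positivity)
  obtain ⟨n, hn, hc⟩ := (hev.and (folner_card_tendsto F hF ⌈(A.card : ℝ) / (ε / 2)⌉₊)).exists
  have hposr : (0 : ℝ) < (F n).card := by exact_mod_cast (hF.1 n).card_pos
  have hA : (A.card : ℝ) ≤ ε / 2 * (F n).card := by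
    have := (Nat.ceil_le.mp hc)
    rw [div_le_iff₀ (by positivity)] at this
    linarith
  refine ⟨F n ∪ A, Finset.subset_union_right, fun g hg => ?_⟩
  have h := hn g hg
  rw [div_lt_iff₀ hposr] at h
  have hle : ((F n).card : ℝ) ≤ (F n ∪ A).card := by
    exact_mod_cast Finset.card_le_card Finset.subset_union_left
  rw [div_le_iff₀ (by linarith)]
  have hsub : (F n ∪ A) \ (F n ∪ A).image (· * g) ⊆ (F n \ (F n).image (· * g)) ∪ A := by
    rw [Finset.image_union]
    intro x hx
    simp only [Finset.mem_sdiff, Finset.mem_union] at hx ⊢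
    tauto
  have h2 : (((F n ∪ A) \ (F n ∪ A).image (· * g)).card : ℝ)
      ≤ (F n \ (F n).image (· * g)).card + A.card := by
    exact_mod_cast (Finset.card_le_card hsub).trans (Finset.card_union_le _ _)
  nlinarith

/-- A countable group has a Følner sequence if and only if it has a Følner exhaustion:
a Følner sequence `(F_n)` with `1 ∈ F_0 ⊆ F_1 ⊆ ⋯` and `G = ⋃_n F_n`. -/
theorem exists_folnerSequence_iff_exists_folnerExhaustion
    (G : Type*) [Group G] [Countable G] :
    (∃ F : ℕ → Finset G, IsFolnerSequence F) ↔
    (∃ F : ℕ → Finset G, IsFolnerSequence F ∧ (1 : G) ∈ F 0 ∧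
      (∀ n, F n ⊆ F (n + 1)) ∧ (∀ g : G, ∃ n, g ∈ F n)) := by
  constructor
  swap
  · rintro ⟨F, hF, -⟩
    exact ⟨F, hF⟩
  rintro ⟨F, hF⟩
  obtain ⟨e, he⟩ := exists_surjective_nat G
  choose Φ hΦ1 hΦ2 using fun (n : ℕ) (A : Finset G) =>
    folner_key F hF (1 / ((n : ℝ) + 1)) (by positivity) ((Finset.range n).image e) A
  let E : ℕ → Finset G := fun n =>
    Nat.rec (Φ 0 {1}) (fun n A => Φ (n + 1) (insert (e n) A)) n
  have hE0 : E 0 = Φ 0 {1} := rfl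
  have hES : ∀ n, E (n + 1) = Φ (n + 1) (insert (e n) (E n)) := fun n => rfl
  have hmono : ∀ n, E n ⊆ E (n + 1) := fun n => by
    rw [hES]; exact (Finset.subset_insert _ _).trans (hΦ1 _ _)
  have h1 : (1 : G) ∈ E 0 := by rw [hE0]; exact hΦ1 _ _ (by simp)
  have hmono' : Monotone E := monotone_nat_of_le_succ hmono
  refine ⟨E, ⟨fun n => ⟨1, hmono' (Nat.zero_le n) h1⟩, fun g => ?_⟩, h1, hmono, fun g => ?_⟩
  · obtain ⟨i, rfl⟩ := he g
    refine squeeze_zero' (Filter.Eventually.of_forall fun n => by positivity) ?_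
      tendsto_one_div_add_atTop_nhds_zero_nat
    filter_upwards [Filter.eventually_gt_atTop i] with n hn
    have hmem : e i ∈ (Finset.range n).image e :=
      Finset.mem_image_of_mem _ (Finset.mem_range.mpr hn)
    cases n with
    | zero => omega
    | succ m => rw [hES]; exact hΦ2 _ _ _ hmem
  · obtain ⟨i, rfl⟩ := he g
    exact ⟨i + 1, by rw [hES]; exact hΦ1 _ _ (by simp)⟩
end

section
/- Let a group G act on the right on a set Ω. If there exist pairwise disjoint subsets X_1,…,X_n and Y_1,…,Y_m of Ω and elements g_1,…,g_n, h_1,…,h_m of G such that Ω = ⋃_{i=1}^n X_i g_i = ⋃_{j=1}^m Y_j h_j (unions not assumed disjoint), then Ω is G-paradoxical, i.e. there exist pairwise disjoint subsets X'_1,…,X'_n and Y'_1,…,Y'_m of Ω and elements g'_1,…,g'_n, h'_1,…,h'_m of G such that Ω = (⨆_{i=1}^n X'_i) ⊔ (⨆_{j=1}^m Y'_j) = ⨆_{i=1}^n X'_i g'_i = ⨆_{j=1}^m Y'_j h'_j, where ⊔ and ⨆ denote disjoint unions. -/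
/-- Points reached from `W` by pulling back along the pieces. -/
inductive Reach {G Ω : Type*} (act : Ω → G → Ω) {n : ℕ} (X : Fin n → Set Ω) (g : Fin n → G)
    (W : Set Ω) : Ω → Prop
  | base (x : Ω) : x ∈ W → Reach act X g W x
  | step (x : Ω) (i : Fin n) : x ∈ X i → Reach act X g W (act x (g i)) → Reach act X g W x

theorem shrink_aux {G Ω : Type*} (act : Ω → G → Ω)
    (n : ℕ) (X : Fin n → Set Ω) (g : Fin n → G)
    (hX : (⋃ i, (fun x => act x (g i)) '' X i) = Set.univ) :
    ∃ X' : Fin n → Set Ω, (∀ i, X' i ⊆ X i) ∧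
      (∀ y, ∃ i, ∃ x ∈ X' i, act x (g i) = y) ∧
      (∀ i j x y, x ∈ X' i → y ∈ X' j → act x (g i) = act y (g j) → i = j) := by
  have h1 : ∀ y, ∃ i, ∃ x ∈ X i, act x (g i) = y := by
    intro y
    have : y ∈ ⋃ i, (fun x => act x (g i)) '' X i := by rw [hX]; trivial
    simpa using this
  choose c hc using h1
  refine ⟨fun i => {x | x ∈ X i ∧ c (act x (g i)) = i}, fun i x hx => hx.1, ?_, ?_⟩
  · intro y
    obtain ⟨x, hx, e⟩ := hc y
    exact ⟨c y, x, ⟨hx, by rw [e]⟩, e⟩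
  · rintro i j x y ⟨_, hx⟩ ⟨_, hy⟩ e
    rw [← hx, ← hy, e]

/-- Let a group `G` act on the right on `Ω` via `act`. If there are pairwise disjoint
subsets `X₁,…,Xₙ, Y₁,…,Yₘ` of `Ω` and group elements `g₁,…,gₙ, h₁,…,hₘ` with
`Ω = ⋃ Xᵢgᵢ = ⋃ Yⱼhⱼ` (unions not assumed disjoint), then `Ω` is `G`-paradoxical:
there are pairwise disjoint `X'₁,…,X'ₙ, Y'₁,…,Y'ₘ` and elements `g'ᵢ, h'ⱼ` with
`Ω = (⨆ X'ᵢ) ⊔ (⨆ Y'ⱼ) = ⨆ X'ᵢg'ᵢ = ⨆ Y'ⱼh'ⱼ`, all indicated unions disjoint. -/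
theorem paradoxical_of_weak_decomposition {G Ω : Type*} [Group G]
    (act : Ω → G → Ω)
    (hone : ∀ x : Ω, act x 1 = x)
    (hmul : ∀ (x : Ω) (g g' : G), act x (g * g') = act (act x g) g')
    (n m : ℕ) (X : Fin n → Set Ω) (Y : Fin m → Set Ω) (g : Fin n → G) (h : Fin m → G)
    (hXX : ∀ i j, i ≠ j → Disjoint (X i) (X j))
    (hYY : ∀ i j, i ≠ j → Disjoint (Y i) (Y j))
    (hXY : ∀ i j, Disjoint (X i) (Y j))
    (hX : (⋃ i, (fun x => act x (g i)) '' X i) = Set.univ)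
    (hY : (⋃ j, (fun x => act x (h j)) '' Y j) = Set.univ) :
    ∃ (X' : Fin n → Set Ω) (Y' : Fin m → Set Ω) (g' : Fin n → G) (h' : Fin m → G),
      (∀ i j, i ≠ j → Disjoint (X' i) (X' j)) ∧
      (∀ i j, i ≠ j → Disjoint (Y' i) (Y' j)) ∧
      (∀ i j, Disjoint (X' i) (Y' j)) ∧
      ((⋃ i, X' i) ∪ ⋃ j, Y' j) = Set.univ ∧
      (⋃ i, (fun x => act x (g' i)) '' X' i) = Set.univ ∧
      (⋃ j, (fun x => act x (h' j)) '' Y' j) = Set.univ ∧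
      (∀ i j, i ≠ j →
        Disjoint ((fun x => act x (g' i)) '' X' i) ((fun x => act x (g' j)) '' X' j)) ∧
      (∀ i j, i ≠ j →
        Disjoint ((fun x => act x (h' i)) '' Y' i) ((fun x => act x (h' j)) '' Y' j)) := by
  have inj : ∀ (k : G) (x y : Ω), act x k = act y k → x = y := by
    intro k x y e
    rw [← hone x, ← hone y, ← mul_inv_cancel k, hmul, hmul, e]
  obtain ⟨Y', hYs, hYc, hYd⟩ := shrink_aux act m Y h hY
  obtain ⟨X₁, hXs, hXc, hXd⟩ := shrink_aux act n X g hX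
  rcases Nat.eq_zero_or_pos n with hn | hn
  · have : IsEmpty Ω := ⟨fun y => by
      obtain ⟨i, _⟩ := hXc y
      subst hn
      exact i.elim0⟩
    refine ⟨X, Y, g, h, hXX, hYY, hXY, ?_, hX, hY, ?_, ?_⟩
    · exact Subsingleton.elim _ _
    · intro i j _
      exact Set.disjoint_left.2 fun a => (this.false a).elim
    · intro i j _
      exact Set.disjoint_left.2 fun a => (this.false a).elim
  let o : Fin n := ⟨0, hn⟩
  let g' : Fin n → G := fun i => g i * (g o)⁻¹
  have go : ∀ x, act x (g' o) = x := by
    intro x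
    simp [g', hone]
  have hc' : ∀ y, ∃ i, ∃ x ∈ X₁ i, act x (g' i) = y := by
    intro y
    obtain ⟨i, x, hx, e⟩ := hXc (act y (g o))
    refine ⟨i, x, hx, ?_⟩
    simp only [g']
    rw [hmul, e, ← hmul, mul_inv_cancel, hone]
  have hd' : ∀ i j x y, x ∈ X₁ i → y ∈ X₁ j → act x (g' i) = act y (g' j) → i = j := by
    intro i j x y hx hy e
    simp only [g', hmul] at e
    exact hXd i j x y hx hy (inj _ _ _ e)
  have dXX : ∀ i j x, x ∈ X₁ i → x ∈ X₁ j → i = j := by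
    intro i j x hx hy
    by_contra hne
    exact Set.disjoint_left.1 (hXX i j hne) (hXs _ hx) (hXs _ hy)
  have dYY : ∀ i j x, x ∈ Y' i → x ∈ Y' j → i = j := by
    intro i j x hx hy
    by_contra hne
    exact Set.disjoint_left.1 (hYY i j hne) (hYs _ hx) (hYs _ hy)
  have dXY : ∀ i j x, x ∈ X₁ i → x ∈ Y' j → False := fun i j x hx hy =>
    Set.disjoint_left.1 (hXY i j) (hXs _ hx) (hYs _ hy)
  let W : Set Ω := {x | (∀ i, x ∉ X₁ i) ∧ ∀ j, x ∉ Y' j}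
  let A : Ω → Prop := Reach act X₁ g' W
  have hAY : ∀ x j, A x → x ∉ Y' j := by
    intro x j hx hy
    cases hx with
    | base _ hw => exact hw.2 j hy
    | step _ i hi _ => exact dXY i j x hi hy
  have hAX : ∀ x i, x ∈ X₁ i → (A x ↔ A (act x (g' i))) := by
    intro x i hi
    constructor
    · intro hx
      cases hx with
      | base _ hw => exact (hw.1 i hi).elim
      | step _ k hk hr =>
        obtain rfl := dXX i k x hi hk
        exact hr
    · exact fun hr => Reach.step x i hi hr
  let X' : Fin n → Set Ω := fun i => {x | (x ∈ X₁ i ∧ ¬ A x) ∨ (A x ∧ i = o)}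
  refine ⟨X', Y', g', h, ?_, ?_, ?_, ?_, ?_, ?_, ?_, ?_⟩
  · intro i j hne
    refine Set.disjoint_left.2 fun x => ?_
    rintro (⟨a, b⟩ | ⟨a, b⟩) (⟨c, d⟩ | ⟨c, d⟩)
    · exact hne (dXX _ _ _ a c)
    · exact b c
    · exact d a
    · exact hne (b.trans d.symm)
  · exact fun i j hne => Set.disjoint_left.2 fun x hx hy => hne (dYY _ _ _ hx hy)
  · intro i j
    refine Set.disjoint_left.2 fun x => ?_
    rintro (⟨a, b⟩ | ⟨a, b⟩) hy
    · exact dXY _ _ _ a hy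
    · exact hAY _ _ a hy
  · refine Set.eq_univ_of_forall fun x => ?_
    by_cases hA : A x
    · exact Or.inl (Set.mem_iUnion.2 ⟨o, Or.inr ⟨hA, rfl⟩⟩)
    by_cases h1 : ∃ i, x ∈ X₁ i
    · obtain ⟨i, hi⟩ := h1
      exact Or.inl (Set.mem_iUnion.2 ⟨i, Or.inl ⟨hi, hA⟩⟩)
    by_cases h2 : ∃ j, x ∈ Y' j
    · exact Or.inr (Set.mem_iUnion.2 h2)
    · exact (hA (Reach.base x ⟨not_exists.1 h1, not_exists.1 h2⟩)).elim
  · refine Set.eq_univ_of_forall fun y => Set.mem_iUnion.2 ?_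
    by_cases hA : A y
    · exact ⟨o, y, Or.inr ⟨hA, rfl⟩, go y⟩
    · obtain ⟨i, x, hx, e⟩ := hc' y
      refine ⟨i, x, Or.inl ⟨hx, ?_⟩, e⟩
      rw [hAX x i hx, e]
      exact hA
  · refine Set.eq_univ_of_forall fun y => Set.mem_iUnion.2 ?_
    obtain ⟨i, x, hx, e⟩ := hYc y
    exact ⟨i, x, hx, e⟩
  · intro i j hne
    refine Set.disjoint_left.2 ?_
    rintro z ⟨x, hx, rfl⟩ ⟨y, hy, e⟩
    change act y (g' j) = act x (g' i) at e
    rcases hx with ⟨a, b⟩ | ⟨a, b⟩ <;> rcases hy with ⟨c, d⟩ | ⟨c, d⟩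
    · exact hne (hd' _ _ _ _ a c e.symm)
    · rw [hAX x i a, ← e, d, go] at b
      exact b c
    · rw [hAX y j c, e, b, go] at d
      exact d a
    · exact hne (b.trans d.symm)
  · intro i j hne
    refine Set.disjoint_left.2 ?_
    rintro z ⟨x, hx, rfl⟩ ⟨y, hy, e⟩
    exact hne (hYd _ _ _ _ hx hy e.symm)
end

section
/- For a group G the following are equivalent: (i) G is paradoxical (the action of G on itself by right multiplication is paradoxical); (ii) every free right action of G on a nonempty set is paradoxical; (iii) there exists a free right action of G on a nonempty set that is paradoxical. -/
/-- A subset `E` of a right `G`-set `Ω` (with action `act`) is `G`-paradoxical: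
there are pairwise disjoint subsets `X₁,…,Xₙ, Y₁,…,Yₘ` of `E` and group elements
`g₁,…,gₙ, h₁,…,hₘ` such that `E = (⨆ Xᵢ) ⊔ (⨆ Yⱼ) = ⨆ Xᵢgᵢ = ⨆ Yⱼhⱼ`,
all indicated unions being disjoint. -/
def IsParadoxical {G Ω : Type*} [Group G] (act : Ω → G → Ω) (E : Set Ω) : Prop :=
  ∃ (n m : ℕ) (X : Fin n → Set Ω) (Y : Fin m → Set Ω) (g : Fin n → G) (h : Fin m → G),
    (∀ i, X i ⊆ E) ∧ (∀ j, Y j ⊆ E) ∧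
    (∀ i j, i ≠ j → Disjoint (X i) (X j)) ∧
    (∀ i j, i ≠ j → Disjoint (Y i) (Y j)) ∧
    (∀ i j, Disjoint (X i) (Y j)) ∧
    E = ((⋃ i, X i) ∪ ⋃ j, Y j) ∧
    E = (⋃ i, (fun x => act x (g i)) '' X i) ∧
    E = (⋃ j, (fun x => act x (h j)) '' Y j) ∧
    (∀ i j, i ≠ j →
      Disjoint ((fun x => act x (g i)) '' X i) ((fun x => act x (g j)) '' X j)) ∧
    (∀ i j, i ≠ j →
      Disjoint ((fun x => act x (h i)) '' Y i) ((fun x => act x (h j)) '' Y j))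

theorem IsParadoxical.pullback {G Ω Ω' : Type*} [Group G] (act : Ω → G → Ω) (act' : Ω' → G → Ω')
    (h1 : ∀ x : Ω, act x 1 = x)
    (hm : ∀ (x : Ω) (g g' : G), act x (g * g') = act (act x g) g')
    (h1' : ∀ x : Ω', act' x 1 = x)
    (hm' : ∀ (x : Ω') (g g' : G), act' x (g * g') = act' (act' x g) g')
    (f : Ω → Ω') (hf : ∀ x g, f (act x g) = act' (f x) g)
    (H : IsParadoxical act' Set.univ) : IsParadoxical act Set.univ := by
  have key : ∀ (g : G) (A : Set Ω'),
      (fun x => act x g) '' (f ⁻¹' A) = f ⁻¹' ((fun x => act' x g) '' A) := by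
    intro g A
    ext y
    constructor
    · rintro ⟨x, hx, rfl⟩
      exact ⟨f x, hx, (hf x g).symm⟩
    · rintro ⟨z, hz, hzy⟩
      refine ⟨act y g⁻¹, ?_, ?_⟩
      · have : f (act y g⁻¹) = z := by
          have hzy' : act' z g = f y := hzy
          rw [hf, ← hzy', ← hm', mul_inv_cancel, h1']
        simpa [this] using hz
      · change act (act y g⁻¹) g = y
        rw [← hm, inv_mul_cancel, h1]
  obtain ⟨n, m, X, Y, g, h, -, -, a, b, c, d, e, i, j, k⟩ := H
  refine ⟨n, m, fun i => f ⁻¹' X i, fun i => f ⁻¹' Y i, g, h, fun _ => Set.subset_univ _,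
    fun _ => Set.subset_univ _, fun p q hpq => (a p q hpq).preimage f,
    fun p q hpq => (b p q hpq).preimage f, fun p q => (c p q).preimage f, ?_, ?_, ?_, ?_, ?_⟩
  · rw [← Set.preimage_iUnion, ← Set.preimage_iUnion, ← Set.preimage_union, ← d, Set.preimage_univ]
  · simp only [key]
    rw [← Set.preimage_iUnion, ← e, Set.preimage_univ]
  · simp only [key]
    rw [← Set.preimage_iUnion, ← i, Set.preimage_univ]
  · intro p q hpq
    simp only [key]
    exact (j p q hpq).preimage f
  · intro p q hpq
    simp only [key]
    exact (k p q hpq).preimage f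

theorem exists_equivariant_of_free {G Ω : Type*} [Group G] (act : Ω → G → Ω)
    (h1 : ∀ x : Ω, act x 1 = x)
    (hm : ∀ (x : Ω) (g g' : G), act x (g * g') = act (act x g) g')
    (hfree : ∀ (x : Ω) (g : G), act x g = x → g = 1) :
    ∃ f : Ω → G, ∀ x g, f (act x g) = f x * g := by
  let s : Setoid Ω :=
    { r := fun x y => ∃ g, act x g = y
      iseqv :=
        { refl := fun x => ⟨1, h1 x⟩
          symm := by
            rintro x y ⟨g, rfl⟩
            exact ⟨g⁻¹, by rw [← hm, mul_inv_cancel, h1]⟩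
          trans := by
            rintro x y z ⟨g, rfl⟩ ⟨g', rfl⟩
            exact ⟨g * g', hm _ _ _⟩ } }
  let rep : Ω → Ω := fun x => (Quotient.mk s x).out
  have hrep : ∀ x, ∃ u, act (rep x) u = x := fun x => Quotient.mk_out (s := s) x
  have hinv : ∀ x g, rep (act x g) = rep x := by
    intro x g
    have : Quotient.mk s (act x g) = Quotient.mk s x :=
      Quotient.sound (s.iseqv.symm ⟨g, rfl⟩)
    simp only [rep, this]
  choose f hf using hrep
  refine ⟨f, fun x g => ?_⟩
  have e1 := hf (act x g)
  rw [hinv] at e1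
  have e2 : act (rep x) (f x * g) = act x g := by rw [hm, hf]
  have e3 : act (rep x) (f (act x g) * (f x * g)⁻¹) = rep x := by
    rw [hm, e1, ← e2, ← hm, mul_inv_cancel, h1]
  exact mul_inv_eq_one.mp (hfree _ _ e3)

/-- For a group `G` the following are equivalent: (i) `G` is paradoxical (for the action
of `G` on itself by right multiplication); (ii) every free right action of `G` on a
nonempty set is paradoxical; (iii) some free right action of `G` on a nonempty set is
paradoxical. -/
theorem paradoxical_group_iff_free_actions (G : Type u) [Group G] :
    (IsParadoxical (fun (x g : G) => x * g) Set.univ ↔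
      ∀ (Ω : Type u) (act : Ω → G → Ω), Nonempty Ω →
        (∀ x : Ω, act x 1 = x) →
        (∀ (x : Ω) (g g' : G), act x (g * g') = act (act x g) g') →
        (∀ (x : Ω) (g : G), act x g = x → g = 1) →
        IsParadoxical act Set.univ) ∧
    ((∀ (Ω : Type u) (act : Ω → G → Ω), Nonempty Ω →
        (∀ x : Ω, act x 1 = x) →
        (∀ (x : Ω) (g g' : G), act x (g * g') = act (act x g) g') →
        (∀ (x : Ω) (g : G), act x g = x → g = 1) →
        IsParadoxical act Set.univ) ↔
      ∃ (Ω : Type u) (act : Ω → G → Ω), Nonempty Ω ∧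
        (∀ x : Ω, act x 1 = x) ∧
        (∀ (x : Ω) (g g' : G), act x (g * g') = act (act x g) g') ∧
        (∀ (x : Ω) (g : G), act x g = x → g = 1) ∧
        IsParadoxical act Set.univ) := by
  have A : IsParadoxical (fun (x g : G) => x * g) Set.univ →
      ∀ (Ω : Type u) (act : Ω → G → Ω), Nonempty Ω →
        (∀ x : Ω, act x 1 = x) →
        (∀ (x : Ω) (g g' : G), act x (g * g') = act (act x g) g') →
        (∀ (x : Ω) (g : G), act x g = x → g = 1) →
        IsParadoxical act Set.univ := by
    intro H Ω act _ h1 hm hfree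
    obtain ⟨f, hf⟩ := exists_equivariant_of_free act h1 hm hfree
    exact IsParadoxical.pullback act (fun (x g : G) => x * g) h1 hm mul_one
      (fun x g g' => (mul_assoc x g g').symm) f hf H
  have B : ∀ (Ω : Type u) (act : Ω → G → Ω), Nonempty Ω →
        (∀ x : Ω, act x 1 = x) →
        (∀ (x : Ω) (g g' : G), act x (g * g') = act (act x g) g') →
        IsParadoxical act Set.univ → IsParadoxical (fun (x g : G) => x * g) Set.univ := by
    rintro Ω act ⟨x₀⟩ h1 hm H
    exact IsParadoxical.pullback (fun (x g : G) => x * g) act mul_one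
      (fun x g g' => (mul_assoc x g g').symm) h1 hm (fun g => act x₀ g) (fun x g => hm x₀ x g) H
  have C : ∀ (x g : G), x * g = x → g = 1 := fun x g h => mul_eq_left.mp h
  have D : ∀ (x g g' : G), x * (g * g') = x * g * g' := fun x g g' => (mul_assoc x g g').symm
  refine ⟨⟨A, fun H => H G (fun x g => x * g) ⟨1⟩ mul_one D C⟩, fun H => ?_, ?_⟩
  · exact ⟨G, fun x g => x * g, ⟨1⟩, mul_one, D, C, H G (fun x g => x * g) ⟨1⟩ mul_one D C⟩
  · rintro ⟨Ω, act, hne, h1, hm, -, H⟩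
    exact A (B Ω act hne h1 hm H)
end

section
/- The rotation group SO(3) of 3×3 real orthogonal matrices of determinant 1 contains a subgroup isomorphic to the free group on two generators; equivalently, there is an injective group homomorphism from the free group of rank 2 into SO(3). In particular, the matrices A = (1/7)[[6,2,−3],[2,3,6],[3,−6,2]] and B = (1/7)[[2,6,−3],[−6,3,2],[3,2,6]] generate a free subgroup of rank 2 of SO(3). -/
/-- The rotation matrix `A = (1/7)[[6,2,−3],[2,3,6],[3,−6,2]]`. -/
noncomputable def rotA : Matrix (Fin 3) (Fin 3) ℝ :=
  (7 : ℝ)⁻¹ • !![6, 2, -3; 2, 3, 6; 3, -6, 2]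

/-- The rotation matrix `B = (1/7)[[2,6,−3],[−6,3,2],[3,2,6]]`. -/
noncomputable def rotB : Matrix (Fin 3) (Fin 3) ℝ :=
  (7 : ℝ)⁻¹ • !![2, 6, -3; -6, 3, 2; 3, 2, 6]

def intM : Fin 2 × Bool → Matrix (Fin 3) (Fin 3) ℤ
  | (0, true) => !![6, 2, -3; 2, 3, 6; 3, -6, 2]
  | (0, false) => !![6, 2, 3; 2, 3, -6; -3, 6, 2]
  | (1, true) => !![2, 6, -3; -6, 3, 2; 3, 2, 6]
  | (1, false) => !![2, -6, 3; 6, 3, 2; -3, 2, 6]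

def colU : Fin 2 × Bool → Fin 3 → ZMod 7
  | (0, true) => ![6, 2, 3]
  | (0, false) => ![1, 5, 3]
  | (1, true) => ![2, 1, 3]
  | (1, false) => ![1, 3, 2]

def rowV (x : Fin 2 × Bool) : Fin 3 → ZMod 7 := colU (x.1, !x.2)

theorem intM_mod (x : Fin 2 × Bool) :
    (intM x).map (Int.castRingHom (ZMod 7)) = Matrix.vecMulVec (colU x) (rowV x) := by
  ext i j
  simp only [Matrix.map_apply, Matrix.vecMulVec_apply]
  revert x i j
  decide

theorem dot_ne (x y : Fin 2 × Bool) (h : x.1 = y.1 → x.2 = y.2) :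
    dotProduct (rowV x) (colU y) ≠ 0 := by
  revert x y
  decide

theorem rowV_ne (x : Fin 2 × Bool) : rowV x ≠ 0 := by
  revert x
  decide

theorem colU_ne (x : Fin 2 × Bool) : colU x ≠ 0 := by
  revert x
  decide

theorem prod_mod (L : List (Fin 2 × Bool)) : ∀ x, FreeGroup.IsReduced (x :: L) →
    ∃ r : Fin 3 → ZMod 7, r ≠ 0 ∧
      (((x :: L).map intM).prod).map (Int.castRingHom (ZMod 7)) = Matrix.vecMulVec (colU x) r := by
  have : Fact (Nat.Prime 7) := ⟨by norm_num⟩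
  induction L with
  | nil => intro x _; exact ⟨rowV x, rowV_ne x, by simpa using intM_mod x⟩
  | cons y L ih =>
    intro x h
    rw [FreeGroup.isReduced_cons_cons] at h
    obtain ⟨r, hr, he⟩ := ih y h.2
    refine ⟨dotProduct (rowV x) (colU y) • r, smul_ne_zero (dot_ne x y h.1) hr, ?_⟩
    rw [List.map_cons, List.prod_cons, Matrix.map_mul, he, intM_mod,
      Matrix.vecMulVec_mul_vecMulVec]

theorem rotA_mem : rotA ∈ Matrix.orthogonalGroup (Fin 3) ℝ := by
  rw [Matrix.mem_orthogonalGroup_iff]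
  ext i j
  fin_cases i <;> fin_cases j <;>
    simp [rotA, Matrix.mul_apply, Fin.sum_univ_three, Matrix.star_apply] <;> norm_num

theorem rotB_mem : rotB ∈ Matrix.orthogonalGroup (Fin 3) ℝ := by
  rw [Matrix.mem_orthogonalGroup_iff]
  ext i j
  fin_cases i <;> fin_cases j <;>
    simp [rotB, Matrix.mul_apply, Fin.sum_univ_three, Matrix.star_apply] <;> norm_num

noncomputable def gens : Fin 2 → Matrix.orthogonalGroup (Fin 3) ℝ :=
  ![⟨rotA, rotA_mem⟩, ⟨rotB, rotB_mem⟩]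

theorem gens_coe (x : Fin 2 × Bool) :
    ((cond x.2 (gens x.1) (gens x.1)⁻¹ : Matrix.orthogonalGroup (Fin 3) ℝ) :
      Matrix (Fin 3) (Fin 3) ℝ) = (7 : ℝ)⁻¹ • (intM x).map (Int.castRingHom ℝ) := by
  obtain ⟨i, b⟩ := x
  fin_cases i <;> cases b <;> ext i j <;> fin_cases i <;> fin_cases j <;>
    simp [gens, rotA, rotB, intM, Matrix.star_apply]

theorem lift_coe (L : List (Fin 2 × Bool)) :
    ((FreeGroup.lift gens (FreeGroup.mk L) : Matrix.orthogonalGroup (Fin 3) ℝ) :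
      Matrix (Fin 3) (Fin 3) ℝ) =
      ((7 : ℝ)⁻¹) ^ L.length • ((L.map intM).prod).map (Int.castRingHom ℝ) := by
  rw [FreeGroup.lift_mk]
  induction L with
  | nil => simp
  | cons x L ih =>
    rw [List.map_cons, List.prod_cons, Submonoid.coe_mul, ih, gens_coe, List.map_cons,
      List.prod_cons, Matrix.map_mul, Matrix.smul_mul, Matrix.mul_smul, smul_smul,
      List.length_cons, pow_succ']

theorem intM_det (x : Fin 2 × Bool) : (intM x).det = 7 ^ 3 := by
  revert x; decide

theorem prod_det (L : List (Fin 2 × Bool)) :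
    ((L.map intM).prod).det = (7 ^ L.length) ^ 3 := by
  induction L with
  | nil => simp
  | cons x L ih =>
    rw [List.map_cons, List.prod_cons, Matrix.det_mul, ih, intM_det, List.length_cons]; ring

/-- `SO(3)` contains a subgroup isomorphic to the free group on two generators:
there is an injective group homomorphism from the free group of rank 2 into the
orthogonal group whose image consists of matrices of determinant `1`; moreover it can be
chosen sending the generators to the matrices `A` and `B` above, so `A, B` generate a
free subgroup of rank 2 of `SO(3)`. -/
theorem so3_contains_free_group_of_rank_two :
    ∃ φ : FreeGroup (Fin 2) →* Matrix.orthogonalGroup (Fin 3) ℝ,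
      Function.Injective φ ∧
      (∀ w : FreeGroup (Fin 2), ((φ w : Matrix (Fin 3) (Fin 3) ℝ)).det = 1) ∧
      (φ (FreeGroup.of 0) : Matrix (Fin 3) (Fin 3) ℝ) = rotA ∧
      (φ (FreeGroup.of 1) : Matrix (Fin 3) (Fin 3) ℝ) = rotB := by
  refine ⟨FreeGroup.lift gens, ?_, ?_, by simp [gens], by simp [gens]⟩
  · rw [injective_iff_map_eq_one]
    intro w hw
    have hred : FreeGroup.IsReduced w.toWord := FreeGroup.isReduced_toWord
    have hc := lift_coe w.toWord
    rw [FreeGroup.mk_toWord, hw] at hc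
    rw [← FreeGroup.toWord_eq_nil_iff]
    rcases hL : w.toWord with _ | ⟨x, L⟩
    · rfl
    exfalso
    rw [hL] at hc hred
    obtain ⟨r, hr, he⟩ := prod_mod L x hred
    have hint : ((x :: L).map intM).prod = (7 : ℤ) ^ (L.length + 1) • (1 : Matrix (Fin 3) (Fin 3) ℤ) := by
      ext i j
      have h := congrFun (congrFun hc i) j
      generalize ((x :: L).map intM).prod = P at h
      have h7 : (7 : ℝ) ^ (L.length + 1) ≠ 0 := by positivity
      simp only [List.length_cons, Matrix.smul_apply, Matrix.map_apply, smul_eq_mul, inv_pow,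
        OneMemClass.coe_one] at h
      rw [eq_inv_mul_iff_mul_eq₀ h7] at h
      have : ((P i j : ℤ) : ℝ) = (((7 : ℤ) ^ (L.length + 1) * (1 : Matrix (Fin 3) (Fin 3) ℤ) i j : ℤ) : ℝ) := by
        rw [← eq_intCast (Int.castRingHom ℝ) (P i j), ← h]
        by_cases hij : i = j <;> simp [Matrix.one_apply, hij]
      simpa using (Int.cast_injective this)
    rw [hint] at he
    have h70 : ((7 : ℤ) : ZMod 7) = 0 := by decide +revert
    have : Fact (Nat.Prime 7) := ⟨by norm_num⟩
    obtain ⟨i, hi⟩ := Function.ne_iff.mp (colU_ne x)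
    obtain ⟨j, hj⟩ := Function.ne_iff.mp hr
    have h := congrFun (congrFun he i) j
    rw [Matrix.vecMulVec_apply] at h
    refine mul_ne_zero hi hj (h.symm.trans ?_)
    rw [Matrix.map_apply, Matrix.smul_apply, smul_eq_mul, map_mul, map_pow, eq_intCast, h70, pow_succ,
      mul_zero, zero_mul]
  · intro w
    have hc := lift_coe w.toWord
    rw [FreeGroup.mk_toWord] at hc
    rw [hc, Matrix.det_smul, ← RingHom.mapMatrix_apply, ← RingHom.map_det, prod_det]
    simp
end

section
/- There exists a countable subset X of the unit sphere 𝕊² in ℝ³ such that 𝕊² \ X is SO(3)-paradoxical with respect to the natural action of SO(3) on ℝ³ (Hausdorff Paradox). -/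
/-- `SO(3)`: the subgroup of the orthogonal group `O(3)` of matrices of determinant `1`. -/
def SO3 : Subgroup (Matrix.orthogonalGroup (Fin 3) ℝ) where
  carrier := {A | ((A : Matrix (Fin 3) (Fin 3) ℝ)).det = 1}
  one_mem' := by simp
  mul_mem' := by
    intro a b ha hb
    simp only [Set.mem_setOf_eq, Matrix.UnitaryGroup.mul_val, Matrix.det_mul] at *
    rw [ha, hb, mul_one]
  inv_mem' := by
    intro a ha
    simp only [Set.mem_setOf_eq, Matrix.UnitaryGroup.inv_val] at *
    rw [Matrix.star_eq_conjTranspose, Matrix.det_conjTranspose, ha, star_one]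

/-- The natural (right) action of `SO(3)` on `ℝ³` by matrix multiplication. -/
def so3Act (v : Fin 3 → ℝ) (A : SO3) : Fin 3 → ℝ :=
  Matrix.vecMul v (A : Matrix (Fin 3) (Fin 3) ℝ)

/-- The unit sphere `𝕊²` centred at the origin in `ℝ³`. -/
def unitSphere : Set (Fin 3 → ℝ) :=
  {v | v 0 ^ 2 + v 1 ^ 2 + v 2 ^ 2 = 1}

section HausdorffAux
open Matrix

abbrev HF := FreeGroup Bool

def hS (c : Bool × Bool) : Set HF := {w | w.toWord.head? = some c}

theorem hS_mul (a : Bool) (w : HF) :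
    FreeGroup.of a * w ∈ hS (a, true) ↔ w ∉ hS (a, false) := by
  have hred := FreeGroup.isReduced_toWord (x := w)
  have hw := FreeGroup.reduce_toWord w
  simp only [hS, Set.mem_ofPred_eq, FreeGroup.toWord_mul, FreeGroup.toWord_of,
    List.singleton_append, FreeGroup.reduce.cons, hw]
  generalize w.toWord = L at *
  match L with
  | [] => simp
  | [(c, d)] => cases a <;> cases c <;> cases d <;> simp
  | (c, d) :: (e, f) :: L =>
    simp only [FreeGroup.IsReduced, List.isChain_cons_cons] at hred
    have h1 := hred.1
    cases a <;> cases c <;> cases d <;> cases e <;> cases f <;> simp at h1 ⊢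

theorem free_decomp : ∃ A1 A2 B1 B2 : Set HF,
    (∀ w, w ∈ A1 ∨ w ∈ A2 ∨ w ∈ B1 ∨ w ∈ B2) ∧
    (∀ w, w ∈ A1 → w ∉ A2 ∧ w ∉ B1 ∧ w ∉ B2) ∧
    (∀ w, w ∈ A2 → w ∉ B1 ∧ w ∉ B2) ∧ (∀ w, w ∈ B1 → w ∉ B2) ∧
    (∀ w, FreeGroup.of true * w ∈ A1 ↔ w ∉ A2) ∧
    (∀ w, FreeGroup.of false * w ∈ B1 ↔ w ∉ B2) := by
  let T : Set HF := {w | ∃ n : ℕ, w = ((FreeGroup.of true) ^ n)⁻¹}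
  have hT : ∀ w ∈ T, ∀ d, w ∉ hS (false, d) := by
    rintro w ⟨n, rfl⟩ d h
    simp only [hS, Set.mem_ofPred_eq, FreeGroup.toWord_inv, FreeGroup.toWord_of_pow,
      FreeGroup.invRev] at h
    have := List.mem_of_mem_head? h
    simp at this
  refine ⟨hS (true, true) ∪ T, hS (true, false) \ T, hS (false, true), hS (false, false),
    ?_, ?_, ?_, ?_, ?_, ?_⟩
  · intro w
    rcases h : w.toWord.head? with _ | ⟨c, d⟩
    · left; right
      refine ⟨0, ?_⟩
      simpa using h
    · by_cases hw : w ∈ T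
      · left; right; exact hw
      · cases c <;> cases d <;> simp [hS, h, hw]
  · rintro w (h | h)
    · simp only [hS, Set.mem_ofPred_eq] at h
      simp [hS, h]
    · exact ⟨fun h' => h'.2 h, hT w h _, hT w h _⟩
  · rintro w ⟨h, -⟩
    simp only [hS, Set.mem_ofPred_eq] at h
    simp [hS, h]
  · intro w h
    simp only [hS, Set.mem_ofPred_eq] at h
    simp [hS, h]
  · intro w
    have h1 := hS_mul true w
    constructor
    · rintro (h | ⟨n, h⟩) h2
      · exact h1.1 h h2.1
      · refine h2.2 ⟨n + 1, ?_⟩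
        rw [eq_comm, pow_succ, _root_.mul_inv_rev, ← h]; simp
    · intro h
      by_cases h3 : w ∈ hS (true, false)
      · have h4 : w ∈ T := by
          by_contra h4
          exact h ⟨h3, h4⟩
        obtain ⟨n, rfl⟩ := h4
        right
        cases n with
        | zero => simp [hS] at h3
        | succ n => refine ⟨n, ?_⟩; rw [pow_succ, _root_.mul_inv_rev]; simp
      · exact Or.inl (h1.2 h3)
  · intro w
    exact hS_mul false w

theorem exists_W {Ω F : Type*} [Group F] (r : Ω → F → Ω) (h1 : ∀ x, r x 1 = x)
    (hm : ∀ x g h, r x (g * h) = r (r x g) h) (E : Set Ω)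
    (hfree : ∀ x ∈ E, ∀ g, r x g = x → g = 1) (hinv : ∀ x ∈ E, ∀ g, r x g ∈ E) :
    ∃ W : Ω → F, ∀ x ∈ E, ∀ g, W (r x g) = g⁻¹ * W x := by
  let s : Setoid Ω :=
    { r := fun x y => ∃ g, r x g = y
      iseqv := ⟨fun x => ⟨1, h1 x⟩, by
        rintro x y ⟨g, rfl⟩
        exact ⟨g⁻¹, by rw [← hm, mul_inv_cancel, h1]⟩, by
        rintro x y z ⟨g, rfl⟩ ⟨h, rfl⟩
        exact ⟨g * h, hm _ _ _⟩⟩ }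
  have key : ∀ x : Ω, ∃ g, r (Quotient.out (Quotient.mk s x)) g = x := fun x =>
    Quotient.exact (Quotient.out_eq (Quotient.mk s x))
  choose V hV using key
  refine ⟨fun x => (V x)⁻¹, fun x hx g => ?_⟩
  have e : Quotient.mk s (r x g) = Quotient.mk s x := (Quotient.sound ⟨g, rfl⟩ : Quotient.mk s x = _).symm
  have h2 := hV (r x g)
  rw [e] at h2
  have h3 := hV x
  have h4 : r x ((V x)⁻¹ * (V (r x g) * g⁻¹)) = x := by
    have : r x (V x)⁻¹ = Quotient.out (Quotient.mk s x) := by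
      calc r x (V x)⁻¹ = r (r (Quotient.out (Quotient.mk s x)) (V x)) (V x)⁻¹ := by rw [h3]
        _ = _ := by rw [← hm, mul_inv_cancel, h1]
    rw [hm, this, hm, h2, ← hm, mul_inv_cancel, h1]
  have h5 := hfree x hx _ h4
  have h6 : V (r x g) = V x * g := by
    rw [inv_mul_eq_one] at h5; rw [h5]; group
  simp [h6]

theorem parad {Ω G : Type*} [Group G] (act : Ω → G → Ω) (h1 : ∀ x, act x 1 = x)
    (hm : ∀ x g h, act x (g * h) = act (act x g) h) (E : Set Ω) (f : HF →* G)
    (hfree : ∀ x ∈ E, ∀ g, act x (f g) = x → g = 1) (hinv : ∀ x ∈ E, ∀ g, act x (f g) ∈ E) :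
    IsParadoxical act E := by
  obtain ⟨W, hW⟩ := exists_W (fun x g => act x (f g)) (by simp [h1]) (by simp [hm]) E hfree hinv
  obtain ⟨A1, A2, B1, B2, hc, d1, d2, d3, ha, hb⟩ := free_decomp
  have im : ∀ (P : Set HF) (u : HF) (y : Ω),
      y ∈ (fun x => act x (f u)) '' {x | x ∈ E ∧ W x ∈ P} ↔ y ∈ E ∧ u * W y ∈ P := by
    intro P u y
    constructor
    · rintro ⟨x, ⟨hx, hP⟩, rfl⟩
      refine ⟨hinv x hx u, ?_⟩
      have := hW x hx u
      simpa [this] using hP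
    · rintro ⟨hy, hP⟩
      refine ⟨act y (f u⁻¹), ⟨hinv y hy _, ?_⟩, ?_⟩
      · have := hW y hy u⁻¹
        rw [this, inv_inv]; exact hP
      · simp only
        rw [← hm, ← map_mul, inv_mul_cancel, map_one, h1]
  have im1 := fun P y => im P 1 y
  refine ⟨2, 2, ![{x | x ∈ E ∧ W x ∈ A1}, {x | x ∈ E ∧ W x ∈ A2}],
    ![{x | x ∈ E ∧ W x ∈ B1}, {x | x ∈ E ∧ W x ∈ B2}],
    ![f (FreeGroup.of true), f 1], ![f (FreeGroup.of false), f 1],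
    ?_, ?_, ?_, ?_, ?_, ?_, ?_, ?_, ?_, ?_⟩
  · simp only [Fin.forall_fin_two]
    exact ⟨fun x hx => hx.1, fun x hx => hx.1⟩
  · simp only [Fin.forall_fin_two]
    exact ⟨fun x hx => hx.1, fun x hx => hx.1⟩
  · simp [Fin.forall_fin_two, Set.disjoint_left]
    grind
  · simp [Fin.forall_fin_two, Set.disjoint_left]
    grind
  · simp [Fin.forall_fin_two, Set.disjoint_left]
    grind
  · ext x
    simp [Fin.exists_fin_two]
    grind
  · ext x
    simp only [Set.mem_iUnion, Fin.exists_fin_two, Matrix.cons_val_zero, Matrix.cons_val_one, im, one_mul, ha]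
    grind
  · ext x
    simp only [Set.mem_iUnion, Fin.exists_fin_two, Matrix.cons_val_zero, Matrix.cons_val_one, im, one_mul, hb]
    grind
  · simp only [Fin.forall_fin_two, Set.disjoint_left, Matrix.cons_val_zero, Matrix.cons_val_one, im, one_mul, ha]
    grind
  · simp only [Fin.forall_fin_two, Set.disjoint_left, Matrix.cons_val_zero, Matrix.cons_val_one, im, one_mul, hb]
    grind

def rotZ : Bool × Bool → Matrix (Fin 3) (Fin 3) ℤ
  | (true, true) => !![3, 4, 0; -4, 3, 0; 0, 0, 5]
  | (true, false) => !![3, -4, 0; 4, 3, 0; 0, 0, 5]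
  | (false, true) => !![5, 0, 0; 0, 3, 4; 0, -4, 3]
  | (false, false) => !![5, 0, 0; 0, 3, -4; 0, 4, 3]

def rotC : Bool × Bool → Fin 3 → ZMod 5
  | (true, true) => ![3, 1, 0]
  | (true, false) => ![1, 3, 0]
  | (false, true) => ![0, 3, 1]
  | (false, false) => ![0, 1, 3]

def rotN (c : Bool × Bool) : Matrix (Fin 3) (Fin 3) (ZMod 5) := (rotZ c).map (Int.castRingHom (ZMod 5))

theorem rot_step : ∀ a b c d : Bool, (a = c → b = d) → ∃ k : ZMod 5, k ≠ 0 ∧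
    rotN (a, b) *ᵥ rotC (c, d) = k • rotC (a, b) := by
  decide

theorem rot_base : ∀ a b : Bool, ∃ k : ZMod 5, k ≠ 0 ∧
    rotN (a, b) *ᵥ ![1, 0, 1] = k • rotC (a, b) := by
  decide

theorem rotC_ne : ∀ a b : Bool, rotC (a, b) ≠ 0 := by decide

instance : Fact (Nat.Prime 5) := ⟨by norm_num⟩

theorem rot_word (L : List (Bool × Bool)) : ∀ c, FreeGroup.IsReduced (c :: L) →
    ∃ k : ZMod 5, k ≠ 0 ∧ ((c :: L).map rotN).prod *ᵥ ![1, 0, 1] = k • rotC c := by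
  induction L with
  | nil => rintro ⟨a, b⟩ -; simpa using rot_base a b
  | cons d L ih =>
    rintro ⟨a, b⟩ h
    obtain ⟨c, d⟩ := d
    simp only [FreeGroup.IsReduced, List.isChain_cons_cons] at h
    obtain ⟨k, hk, e⟩ := ih (c, d) h.2
    obtain ⟨k', hk', e'⟩ := rot_step a b c d h.1
    refine ⟨k * k', mul_ne_zero hk hk', ?_⟩
    rw [List.map_cons, List.prod_cons, ← Matrix.mulVec_mulVec, e, Matrix.mulVec_smul, e', smul_smul]

theorem rotZ_prod_ne (L : List (Bool × Bool)) (hL : L ≠ []) (h : FreeGroup.IsReduced L) :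
    (L.map rotZ).prod ≠ (5 : ℤ) ^ L.length • (1 : Matrix (Fin 3) (Fin 3) ℤ) := by
  intro e
  obtain ⟨c, L, rfl⟩ := List.exists_cons_of_ne_nil hL
  obtain ⟨k, hk, e'⟩ := rot_word L c h
  have e2 : ((c :: L).map rotN).prod = 0 := by
    have := congrArg (Int.castRingHom (ZMod 5)).mapMatrix e
    rw [map_list_prod, List.map_map] at this
    have h5 : (5 : ZMod 5) = 0 := rfl
    have e3 : ((5 : ℤ) ^ (c :: L).length • (1 : Matrix (Fin 3) (Fin 3) ℤ)) = (((5 : ℤ) ^ (c :: L).length : ℤ) : Matrix (Fin 3) (Fin 3) ℤ) := by simp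
    rw [e3, map_intCast] at this
    refine this.trans ?_
    have h6 : (5 : Matrix (Fin 3) (Fin 3) (ZMod 5)) = 0 := by
      decide
    simp [h6]
  rw [e2, Matrix.zero_mulVec, eq_comm, smul_eq_zero] at e'
  rcases e' with e' | e'
  · exact hk e'
  · exact rotC_ne c.1 c.2 e'

noncomputable def rotR (c : Bool × Bool) : Matrix (Fin 3) (Fin 3) ℝ := (5⁻¹ : ℝ) • (rotZ c).map (Int.castRingHom ℝ)

theorem rotR_orth (a : Bool) : rotR (a, true) ∈ Matrix.orthogonalGroup (Fin 3) ℝ := by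
  rw [Matrix.mem_orthogonalGroup_iff]
  ext i j
  cases a <;> fin_cases i <;> fin_cases j <;>
    simp [rotR, rotZ, Matrix.mul_apply, Fin.sum_univ_three] <;> norm_num

theorem rotR_det (a : Bool) : (rotR (a, true)).det = 1 := by
  cases a <;> simp [rotR, rotZ, Matrix.det_fin_three] <;> norm_num

theorem rotR_star (a : Bool) : star (rotR (a, true)) = rotR (a, false) := by
  ext i j
  cases a <;> fin_cases i <;> fin_cases j <;>
    simp [rotR, rotZ]

noncomputable def rotG (a : Bool) : SO3 := ⟨⟨rotR (a, true), rotR_orth a⟩, rotR_det a⟩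

noncomputable def rotF : HF →* SO3 := FreeGroup.lift rotG

theorem rot_list (L : List (Bool × Bool)) :
    (((L.map fun x => cond x.2 (rotG x.1) (rotG x.1)⁻¹).prod : SO3) : Matrix (Fin 3) (Fin 3) ℝ)
      = (5⁻¹ : ℝ) ^ L.length • ((L.map rotZ).prod).map (Int.castRingHom ℝ) := by
  induction L with
  | nil => simp
  | cons c L ih =>
    have hc : ((cond c.2 (rotG c.1) (rotG c.1)⁻¹ : SO3) : Matrix (Fin 3) (Fin 3) ℝ) = rotR c := by
      obtain ⟨a, b⟩ := c
      cases b
      · exact rotR_star a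
      · rfl
    simp only [List.map_cons, List.prod_cons, List.length_cons, Subgroup.coe_mul,
      Matrix.UnitaryGroup.mul_val, hc, ih]
    rw [rotR, Matrix.map_mul, pow_succ', smul_mul_smul_comm]

theorem rotF_inj (w : HF) (h : rotF w = 1) : w = 1 := by
  by_contra hw
  have hL : w.toWord ≠ [] := by simpa using hw
  refine rotZ_prod_ne _ hL FreeGroup.isReduced_toWord ?_
  have h2 := rot_list w.toWord
  rw [← FreeGroup.lift_mk, FreeGroup.mk_toWord] at h2
  change ((rotF w : SO3) : Matrix (Fin 3) (Fin 3) ℝ) = _ at h2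
  rw [h] at h2
  have h3 : ((w.toWord.map rotZ).prod).map (Int.castRingHom ℝ) = (5 : ℝ) ^ w.toWord.length • 1 := by
    have : (1 : Matrix (Fin 3) (Fin 3) ℝ) = _ := h2
    rw [this, smul_smul, ← mul_pow]; norm_num
  ext i j
  have h4 := congrFun (congrFun h3 i) j
  simp only [Matrix.map_apply, Matrix.smul_apply, Matrix.one_apply, smul_eq_mul, eq_intCast] at h4 ⊢
  split_ifs at h4 ⊢ <;> exact_mod_cast h4

theorem act_one (x : Fin 3 → ℝ) : so3Act x 1 = x := by
  simp [so3Act]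

theorem act_mul (x : Fin 3 → ℝ) (g h : SO3) : so3Act x (g * h) = so3Act (so3Act x g) h := by
  simp [so3Act, Matrix.vecMul_vecMul]

theorem sphere_iff (x : Fin 3 → ℝ) : x ∈ unitSphere ↔ x ⬝ᵥ x = 1 := by
  simp [unitSphere, dotProduct, Fin.sum_univ_three, pow_two]

theorem so3_mul_tr (A : SO3) : (A : Matrix (Fin 3) (Fin 3) ℝ) * (A : Matrix (Fin 3) (Fin 3) ℝ)ᵀ = 1 :=
  (Matrix.mem_orthogonalGroup_iff (Fin 3) ℝ).1 A.1.2

theorem act_dot (x y : Fin 3 → ℝ) (A : SO3) : so3Act x A ⬝ᵥ so3Act y A = x ⬝ᵥ y := by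
  unfold so3Act
  rw [← Matrix.mulVec_transpose _ y, Matrix.dotProduct_mulVec, Matrix.vecMul_vecMul, so3_mul_tr,
    Matrix.vecMul_one]

theorem act_sphere (x : Fin 3 → ℝ) (A : SO3) : so3Act x A ∈ unitSphere ↔ x ∈ unitSphere := by
  rw [sphere_iff, sphere_iff, act_dot]

theorem act_det (u v w : Fin 3 → ℝ) (A : SO3) :
    Matrix.det ![so3Act u A, so3Act v A, so3Act w A] = Matrix.det ![u, v, w] := by
  have : (![so3Act u A, so3Act v A, so3Act w A] : Matrix (Fin 3) (Fin 3) ℝ)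
      = (Matrix.of ![u, v, w]) * (A : Matrix (Fin 3) (Fin 3) ℝ) := by
    ext i j
    fin_cases i <;> rfl
  rw [this, Matrix.det_mul, show ((A : Matrix (Fin 3) (Fin 3) ℝ)).det = 1 from A.2, mul_one]
  rfl

theorem act_cross (v w : Fin 3 → ℝ) (A : SO3) :
    so3Act (crossProduct v w) A = crossProduct (so3Act v A) (so3Act w A) := by
  apply dotProduct_eq
  intro y
  obtain ⟨x, rfl⟩ : ∃ x, y = so3Act x A := ⟨so3Act y A⁻¹, by rw [← act_mul]; simp [act_one]⟩
  rw [act_dot, dotProduct_comm, triple_product_eq_det, dotProduct_comm, triple_product_eq_det,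
    act_det]

theorem fix_pair (A : SO3) (hA : A ≠ 1) (v w : Fin 3 → ℝ) (hv : v ∈ unitSphere)
    (hw : w ∈ unitSphere) (fv : so3Act v A = v) (fw : so3Act w A = w) : w = v ∨ w = -v := by
  have fc := act_cross v w A
  rw [fv, fw] at fc
  rw [sphere_iff] at hv hw
  set n := crossProduct v w with hn
  by_cases h0 : n = 0
  · have h1 := cross_cross_eq_smul_sub_smul' v v w
    have h2 : w = (v ⬝ᵥ w) • v := by
      rw [← hn, h0, hv] at h1
      simp at h1
      exact (sub_eq_zero.1 h1.symm).symm
    have h3 : (v ⬝ᵥ w) * (v ⬝ᵥ w) = 1 := by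
      have := hw
      rw [h2] at this
      simpa [hv] using this
    rcases mul_self_eq_one_iff.1 h3 with h | h
    · left; rw [h2, h, one_smul]
    · right; rw [h2, h]; simp
  · exfalso
    apply hA
    let M : Matrix (Fin 3) (Fin 3) ℝ := Matrix.of ![n, v, w]
    have hM : M * (A : Matrix (Fin 3) (Fin 3) ℝ) = M := by
      ext i j
      fin_cases i
      · exact congrFun fc j
      · exact congrFun fv j
      · exact congrFun fw j
    have hd : M.det ≠ 0 := by
      change Matrix.det ![n, v, w] ≠ 0
      rw [← triple_product_eq_det, ← hn]
      exact fun h => h0 (dotProduct_self_eq_zero.1 h)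
    have hu : IsUnit M := (Matrix.isUnit_iff_isUnit_det M).2 hd.isUnit
    have h1 : (A : Matrix (Fin 3) (Fin 3) ℝ) = 1 := hu.mul_left_cancel (by rw [hM, mul_one])
    exact Subtype.ext (Subtype.ext h1)

theorem fix_countable (A : SO3) (hA : A ≠ 1) :
    {v | v ∈ unitSphere ∧ so3Act v A = v}.Countable := by
  rcases Set.eq_empty_or_nonempty {v | v ∈ unitSphere ∧ so3Act v A = v} with h | ⟨v, hv⟩
  · rw [h]; exact Set.countable_empty
  · refine Set.Countable.mono ?_ (Set.toFinite {v, -v}).countable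
    intro w hw
    exact fix_pair A hA v w hv.1 hw.1 hv.2 hw.2

end HausdorffAux

/-- Hausdorff Paradox: there is a countable subset `X ⊆ 𝕊²` such that `𝕊² \ X` is
`SO(3)`-paradoxical. -/
theorem hausdorff_paradox :
    ∃ X : Set (Fin 3 → ℝ), X ⊆ unitSphere ∧ X.Countable ∧
      IsParadoxical so3Act (unitSphere \ X) := by
  have hcF : Countable HF := (FreeGroup.toWord_injective (α := Bool)).countable
  refine ⟨⋃ g : {g : HF // g ≠ 1}, {v | v ∈ unitSphere ∧ so3Act v (rotF g) = v}, ?_, ?_, ?_⟩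
  · exact Set.iUnion_subset fun g v hv => hv.1
  · exact Set.countable_iUnion fun g => fix_countable _ fun h => g.2 (rotF_inj _ h)
  · apply parad so3Act act_one act_mul _ rotF
    · rintro x ⟨hx, hx'⟩ g hg
      by_contra h
      exact hx' (Set.mem_iUnion.2 ⟨⟨g, h⟩, hx, hg⟩)
    · rintro x ⟨hx, hx'⟩ g
      refine ⟨(act_sphere _ _).2 hx, fun h => hx' ?_⟩
      obtain ⟨⟨k, hk⟩, -, h2⟩ := Set.mem_iUnion.1 h
      refine Set.mem_iUnion.2 ⟨⟨g * k * g⁻¹, ?_⟩, hx, ?_⟩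
      · simpa [conj_eq_one_iff] using hk
      · simp only [map_mul, act_mul] at h2 ⊢
        rw [h2, ← act_mul, ← map_mul, mul_inv_cancel, map_one, act_one]
end

section
/- For every countable subset X of the unit sphere 𝕊² in ℝ³, the set 𝕊² \ X is SO(3)-equidecomposable to 𝕊². -/
/-- Two subsets `X, Y` of a right `G`-set `Ω` (with action `act`) are
`G`-equidecomposable: there are partitions `X = ⨆ᵢ₌₁ⁿ Xᵢ`, `Y = ⨆ᵢ₌₁ⁿ Yᵢ` into pairwise
disjoint pieces and elements `g₁,…,gₙ ∈ G` with `Yᵢ = Xᵢgᵢ` for all `i`. -/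
def Equidecomposable {G Ω : Type*} [Group G] (act : Ω → G → Ω) (X Y : Set Ω) : Prop :=
  ∃ (n : ℕ) (P Q : Fin n → Set Ω) (g : Fin n → G),
    (∀ i j, i ≠ j → Disjoint (P i) (P j)) ∧
    (∀ i j, i ≠ j → Disjoint (Q i) (Q j)) ∧
    X = (⋃ i, P i) ∧ Y = (⋃ i, Q i) ∧
    ∀ i, Q i = (fun x => act x (g i)) '' P i

theorem so3Act_mul (v : Fin 3 → ℝ) (A B : SO3) : so3Act v (A * B) = so3Act (so3Act v A) B := by
  simp [so3Act, Matrix.vecMul_vecMul]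

theorem so3Act_one (v : Fin 3 → ℝ) : so3Act v 1 = v := by
  simp [so3Act]

theorem so3Act_sphere (v : Fin 3 → ℝ) (A : SO3) (hv : v ∈ unitSphere) :
    so3Act v A ∈ unitSphere := by
  have key : ∀ w : Fin 3 → ℝ, w ∈ unitSphere ↔ w ⬝ᵥ w = 1 := by
    intro w
    simp [unitSphere, dotProduct, Fin.sum_univ_three, pow_two]
  rw [key] at hv ⊢
  have h : (A : Matrix (Fin 3) (Fin 3) ℝ) * (A : Matrix (Fin 3) (Fin 3) ℝ).transpose = 1 := by
    have := Matrix.mem_orthogonalGroup_iff (Fin 3) ℝ |>.1 (A : Matrix.orthogonalGroup (Fin 3) ℝ).2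
    simpa [Matrix.star_eq_conjTranspose] using this
  unfold so3Act
  rw [← Matrix.dotProduct_mulVec, ← Matrix.vecMul_transpose, Matrix.vecMul_vecMul, h,
    Matrix.vecMul_one, hv]

theorem exists_rotZ (z : ℂ) (hz : ‖z‖ = 1) : ∃ A : SO3, ∀ v,
    (⟨so3Act v A 0, so3Act v A 1⟩ : ℂ) = ⟨v 0, v 1⟩ * z := by
  have h : z.re * z.re + z.im * z.im = 1 := by
    have := Complex.normSq_eq_norm_sq z
    rw [hz, Complex.normSq_apply] at this; simpa using this
  let M : Matrix (Fin 3) (Fin 3) ℝ := !![z.re, z.im, 0; -z.im, z.re, 0; 0, 0, 1]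
  have hM : M ∈ Matrix.orthogonalGroup (Fin 3) ℝ := by
    rw [Matrix.mem_orthogonalGroup_iff]
    ext i j
    fin_cases i <;> fin_cases j <;>
      simp [M, Matrix.mul_apply, Fin.sum_univ_three, Matrix.star_apply] <;> linarith
  refine ⟨⟨⟨M, hM⟩, ?_⟩, ?_⟩
  · change M.det = 1
    simp [M, Matrix.det_fin_three]; linarith
  · intro v
    apply Complex.ext <;>
      simp [so3Act, M, Matrix.vecMul, dotProduct, Fin.sum_univ_three] <;> ring

theorem exists_rotY (z : ℂ) (hz : ‖z‖ = 1) : ∃ A : SO3, ∀ v,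
    (⟨so3Act v A 0, so3Act v A 2⟩ : ℂ) = ⟨v 0, v 2⟩ * z ∧ so3Act v A 1 = v 1 := by
  have h : z.re * z.re + z.im * z.im = 1 := by
    have := Complex.normSq_eq_norm_sq z
    rw [hz, Complex.normSq_apply] at this; simpa using this
  let M : Matrix (Fin 3) (Fin 3) ℝ := !![z.re, 0, z.im; 0, 1, 0; -z.im, 0, z.re]
  have hM : M ∈ Matrix.orthogonalGroup (Fin 3) ℝ := by
    rw [Matrix.mem_orthogonalGroup_iff]
    ext i j
    fin_cases i <;> fin_cases j <;>
      simp [M, Matrix.mul_apply, Fin.sum_univ_three, Matrix.star_apply] <;> linarith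
  refine ⟨⟨⟨M, hM⟩, ?_⟩, ?_⟩
  · change M.det = 1
    simp [M, Matrix.det_fin_three]; linarith
  · intro v
    constructor
    · apply Complex.ext <;>
        simp [so3Act, M, Matrix.vecMul, dotProduct, Fin.sum_univ_three] <;> ring
    · simp [so3Act, M, Matrix.vecMul, dotProduct, Fin.sum_univ_three]

theorem exists_unit_notMem (B : Set ℂ) (hB : B.Countable) : ∃ z : ℂ, ‖z‖ = 1 ∧ z ∉ B := by
  by_contra! hcon
  have h1 : (Set.Icc (-1 : ℝ) 1) ⊆ Complex.re '' B := by
    intro t ht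
    refine ⟨⟨t, Real.sqrt (1 - t ^ 2)⟩, hcon _ ?_, rfl⟩
    have : (0 : ℝ) ≤ 1 - t ^ 2 := by nlinarith [ht.1, ht.2]
    rw [Complex.norm_def, Complex.normSq_apply, Real.mul_self_sqrt this]
    simp [pow_two]
  have h2 : (Set.Icc (-1 : ℝ) 1).Countable := (hB.image _).mono h1
  have h3 := Cardinal.mk_Icc_real (show (-1 : ℝ) < 1 by norm_num)
  have h4 := Cardinal.le_aleph0_iff_set_countable.2 h2
  rw [h3] at h4
  exact absurd h4 (not_le.2 Cardinal.aleph0_lt_continuum)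

theorem exists_axis (X : Set (Fin 3 → ℝ)) (hX : X ⊆ unitSphere) (hXc : X.Countable) :
    ∃ A : SO3, ∀ x ∈ X, (⟨so3Act x A 0, so3Act x A 1⟩ : ℂ) ≠ 0 := by
  obtain ⟨z, hz, hzB⟩ := exists_unit_notMem
    (⋃ x ∈ X, {Complex.I / (⟨x 0, x 2⟩ : ℂ), -Complex.I / (⟨x 0, x 2⟩ : ℂ)})
    (hXc.biUnion fun x _ => (Set.toFinite _).countable)
  obtain ⟨A, hA⟩ := exists_rotY z hz
  refine ⟨A, fun x hx h0 => hzB ?_⟩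
  have hs := so3Act_sphere x A (hX hx)
  have e0 : so3Act x A 0 = 0 := congrArg Complex.re h0
  have e1 : so3Act x A 1 = 0 := congrArg Complex.im h0
  have e2 : so3Act x A 2 = 1 ∨ so3Act x A 2 = -1 := by
    have : so3Act x A 0 ^ 2 + so3Act x A 1 ^ 2 + so3Act x A 2 ^ 2 = 1 := hs
    rw [e0, e1] at this
    exact sq_eq_sq_iff_eq_or_eq_neg.1 (by linarith)
  have hm := (hA x).1
  rw [e0] at hm
  have hne : (⟨x 0, x 2⟩ : ℂ) ≠ 0 := by
    intro h
    rw [h, zero_mul] at hm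
    have := congrArg Complex.im hm
    simp at this
    rcases e2 with e | e <;> rw [e] at this <;> norm_num at this
  refine Set.mem_biUnion hx ?_
  rcases e2 with e | e <;> rw [e] at hm
  · left
    rw [eq_div_iff hne, mul_comm, ← hm]; rfl
  · right
    change z = _
    rw [eq_div_iff hne, mul_comm, ← hm]
    apply Complex.ext <;> simp

theorem exists_rot (X : Set (Fin 3 → ℝ)) (hX : X ⊆ unitSphere) (hXc : X.Countable) :
    ∃ g : SO3, ∀ n : ℕ, ∀ x ∈ X, so3Act x (g ^ (n + 1)) ∉ X := by
  obtain ⟨A, hA⟩ := exists_axis X hX hXc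
  let w : (Fin 3 → ℝ) → ℂ := fun v => ⟨so3Act v A 0, so3Act v A 1⟩
  obtain ⟨z, hz, hzB⟩ := exists_unit_notMem
    (⋃ n : ℕ, ⋃ x ∈ X, ⋃ y ∈ X, {z : ℂ | z ^ (n + 1) = w y / w x})
    (Set.countable_iUnion fun n => hXc.biUnion fun x _ => hXc.biUnion fun y _ => by
      refine ((Polynomial.nthRootsFinset (n + 1) (w y / w x)).finite_toSet.subset ?_).countable
      intro z hz
      simpa [Polynomial.mem_nthRootsFinset (Nat.succ_pos n)] using hz)
  obtain ⟨R, hR⟩ := exists_rotZ z hz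
  have hRn : ∀ n : ℕ, ∀ v, (⟨so3Act v (R ^ n) 0, so3Act v (R ^ n) 1⟩ : ℂ)
      = ⟨v 0, v 1⟩ * z ^ n := by
    intro n
    induction n with
    | zero => intro v; simp [so3Act_one]
    | succ n ih => intro v; rw [pow_succ, so3Act_mul, hR, ih, pow_succ, mul_assoc]
  refine ⟨A * R * A⁻¹, fun n x hx hy => hzB ?_⟩
  refine Set.mem_iUnion.2 ⟨n, Set.mem_biUnion hx (Set.mem_biUnion hy ?_)⟩
  change z ^ (n + 1) = _
  rw [eq_div_iff (hA x hx), mul_comm]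
  change (⟨so3Act x A 0, so3Act x A 1⟩ : ℂ) * _ = ⟨so3Act _ A 0, so3Act _ A 1⟩
  rw [← hRn, ← so3Act_mul, ← so3Act_mul, conj_pow, inv_mul_cancel_right]

/-- For every countable subset `X` of the unit sphere `𝕊²`, the set `𝕊² \ X` is
`SO(3)`-equidecomposable to `𝕊²`. -/
theorem sphere_minus_countable_equidecomposable_sphere
    (X : Set (Fin 3 → ℝ)) (hX : X ⊆ unitSphere) (hXc : X.Countable) :
    Equidecomposable so3Act (unitSphere \ X) unitSphere := by
  obtain ⟨g, hg⟩ := exists_rot X hX hXc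
  let D : Set (Fin 3 → ℝ) := {v | ∃ n : ℕ, ∃ x ∈ X, so3Act x (g ^ n) = v}
  let E : Set (Fin 3 → ℝ) := {v | ∃ n : ℕ, ∃ x ∈ X, so3Act x (g ^ (n + 1)) = v}
  have hED : E ⊆ D := by rintro v ⟨n, h⟩; exact ⟨n + 1, h⟩
  have hDS : D ⊆ unitSphere := by rintro v ⟨n, x, hx, rfl⟩; exact so3Act_sphere _ _ (hX hx)
  have hXD : X ⊆ D := fun x hx => ⟨0, x, hx, by simp [so3Act_one]⟩
  have hDX : ∀ v ∈ D, v ∈ X ∨ v ∈ E := by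
    rintro v ⟨n, x, hx, rfl⟩
    cases n with
    | zero => left; simpa [so3Act_one] using hx
    | succ n => right; exact ⟨n, x, hx, rfl⟩
  have hEX : ∀ v ∈ E, v ∉ X := by rintro v ⟨n, x, hx, rfl⟩; exact hg n x hx
  refine ⟨2, ![unitSphere \ D, E], ![unitSphere \ D, D], ![1, g⁻¹], ?_, ?_, ?_, ?_, ?_⟩
  · have h : Disjoint (unitSphere \ D) E := Set.disjoint_sdiff_left.mono_right hED
    intro i j hij
    fin_cases i <;> fin_cases j <;> first | exact absurd rfl hij | exact h | exact h.symm
  · have h : Disjoint (unitSphere \ D) D := Set.disjoint_sdiff_left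
    intro i j hij
    fin_cases i <;> fin_cases j <;> first | exact absurd rfl hij | exact h | exact h.symm
  · ext v
    simp only [Set.mem_iUnion, Fin.exists_fin_two, Matrix.cons_val_zero, Matrix.cons_val_one,
      Set.mem_diff]
    have a1 := @hED v
    have a2 := @hDS v
    have a3 := @hXD v
    have a4 := hDX v
    have a5 := hEX v
    tauto
  · ext v
    simp only [Set.mem_iUnion, Fin.exists_fin_two, Matrix.cons_val_zero, Matrix.cons_val_one,
      Set.mem_diff]
    have a2 := @hDS v
    tauto
  · intro i
    fin_cases i
    · simp [so3Act_one]
    · change D = (fun x => so3Act x g⁻¹) '' E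
      ext v
      constructor
      · rintro ⟨n, x, hx, rfl⟩
        refine ⟨_, ⟨n, x, hx, rfl⟩, ?_⟩
        change so3Act _ g⁻¹ = _
        rw [← so3Act_mul, pow_succ, mul_inv_cancel_right]
      · rintro ⟨_, ⟨n, x, hx, rfl⟩, rfl⟩
        refine ⟨n, x, hx, ?_⟩
        change _ = so3Act _ g⁻¹
        rw [← so3Act_mul, pow_succ, mul_inv_cancel_right]
end

section
/- The unit sphere 𝕊² in ℝ³ is SO(3)-paradoxical (Banach–Tarski Paradox for the sphere). -/
namespace BT

theorem act_mul (v : Fin 3 → ℝ) (A B : SO3) : so3Act v (A * B) = so3Act (so3Act v A) B := by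
  simp [so3Act, Matrix.vecMul_vecMul]

theorem act_one (v : Fin 3 → ℝ) : so3Act v 1 = v := by
  simp [so3Act]

theorem act_inv (v : Fin 3 → ℝ) (A : SO3) : so3Act (so3Act v A) A⁻¹ = v := by
  rw [← act_mul, mul_inv_cancel, act_one]

theorem act_inv' (v : Fin 3 → ℝ) (A : SO3) : so3Act (so3Act v A⁻¹) A = v := by
  rw [← act_mul, inv_mul_cancel, act_one]

theorem act_inj (A : SO3) {v w : Fin 3 → ℝ} (h : so3Act v A = so3Act w A) : v = w := by
  rw [← act_inv v A, h, act_inv]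

theorem sphere_iff (v : Fin 3 → ℝ) : v ∈ unitSphere ↔ v ⬝ᵥ v = 1 := by
  simp [unitSphere, dotProduct, Fin.sum_univ_three, pow_two]

theorem act_sphere {v : Fin 3 → ℝ} (hv : v ∈ unitSphere) (A : SO3) : so3Act v A ∈ unitSphere := by
  rw [sphere_iff] at *
  have h : (A : Matrix (Fin 3) (Fin 3) ℝ) * (A : Matrix (Fin 3) (Fin 3) ℝ).transpose = 1 := by
    have := (Matrix.mem_orthogonalGroup_iff (Fin 3) ℝ).1 A.1.2
    simpa using this
  unfold so3Act
  rw [← Matrix.dotProduct_mulVec, Matrix.mulVec_vecMul, h, Matrix.one_mulVec, hv]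

def PW (f : (Fin 3 → ℝ) → (Fin 3 → ℝ)) (A : Set (Fin 3 → ℝ)) : Prop :=
  ∃ F : Finset SO3, ∀ x ∈ A, ∃ g ∈ F, f x = so3Act x g

theorem PW.comp {f g : (Fin 3 → ℝ) → (Fin 3 → ℝ)} {A B : Set (Fin 3 → ℝ)}
    (hg : PW g B) (hf : PW f A) (h : Set.MapsTo f A B) : PW (g ∘ f) A := by
  classical
  obtain ⟨F, hF⟩ := hf
  obtain ⟨F', hF'⟩ := hg
  refine ⟨Finset.image₂ (· * ·) F F', fun x hx => ?_⟩
  obtain ⟨a, ha, e⟩ := hF x hx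
  obtain ⟨b, hb, e'⟩ := hF' _ (h hx)
  refine ⟨a * b, Finset.mem_image₂_of_mem ha hb, ?_⟩
  rw [act_mul, ← e, ← e']; rfl

/-- pieces from a piecewise bijection -/
theorem pieces {f : (Fin 3 → ℝ) → (Fin 3 → ℝ)} {A E : Set (Fin 3 → ℝ)}
    (hf : PW f A) (hb : Set.BijOn f A E) :
    ∃ (n : ℕ) (X : Fin n → Set (Fin 3 → ℝ)) (g : Fin n → SO3),
      (∀ i j, i ≠ j → Disjoint (X i) (X j)) ∧ A = (⋃ i, X i) ∧
      E = (⋃ i, (fun x => so3Act x (g i)) '' X i) ∧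
      (∀ i j, i ≠ j →
      Disjoint ((fun x => so3Act x (g i)) '' X i) ((fun x => so3Act x (g j)) '' X j)) := by
  classical
  obtain ⟨F, hF⟩ := hf
  let g : Fin F.card → SO3 := fun i => (F.equivFin.symm i : SO3)
  have hF' : ∀ x : A, ∃ i, f x = so3Act x (g i) := by
    intro x
    obtain ⟨a, ha, e⟩ := hF x x.2
    exact ⟨F.equivFin ⟨a, ha⟩, by simpa [g] using e⟩
  choose idx hidx using hF'
  let X : Fin F.card → Set (Fin 3 → ℝ) := fun i => {x | ∃ h : x ∈ A, idx ⟨x, h⟩ = i}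
  have key : ∀ i x, x ∈ X i → x ∈ A ∧ so3Act x (g i) = f x := by
    rintro i x ⟨h, rfl⟩
    exact ⟨h, (hidx ⟨x, h⟩).symm⟩
  have hX : ∀ i j, i ≠ j → Disjoint (X i) (X j) := by
    intro i j hij
    rw [Set.disjoint_left]
    rintro x ⟨h, rfl⟩ ⟨h', rfl⟩
    exact hij rfl
  refine ⟨F.card, X, g, hX, ?_, ?_, ?_⟩
  · ext x
    simp only [Set.mem_iUnion]
    exact ⟨fun h => ⟨_, h, rfl⟩, fun ⟨i, h⟩ => h.1⟩
  · ext y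
    simp only [Set.mem_iUnion, Set.mem_image]
    constructor
    · intro hy
      obtain ⟨x, hx, rfl⟩ := hb.surjOn hy
      exact ⟨idx ⟨x, hx⟩, x, ⟨hx, rfl⟩, (hidx ⟨x, hx⟩).symm⟩
    · rintro ⟨i, x, hx, rfl⟩
      rw [(key i x hx).2]
      exact hb.mapsTo (key i x hx).1
  · intro i j hij
    rw [Set.disjoint_left]
    rintro _ ⟨x, hx, rfl⟩ ⟨y, hy, e⟩
    simp only at e
    rw [(key i x hx).2, (key j y hy).2] at e
    have := hb.injOn (key j y hy).1 (key i x hx).1 e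
    subst this
    exact Set.disjoint_left.1 (hX i j hij) hx hy

theorem paradox_of_inj {f g : (Fin 3 → ℝ) → (Fin 3 → ℝ)} {E : Set (Fin 3 → ℝ)}
    (hf : PW f E) (hg : PW g E) (hfE : Set.MapsTo f E E) (hgE : Set.MapsTo g E E)
    (hfi : Set.InjOn f E) (hgi : Set.InjOn g E)
    (hd : ∀ x ∈ E, ∀ y ∈ E, f x ≠ g y) : IsParadoxical so3Act E := by
  classical
  have hA : f '' E ⊆ E := hfE.image_subset
  -- first half
  have h1 : ∃ k, PW k (f '' E) ∧ Set.BijOn k (f '' E) E := by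
    have hl : ∀ x ∈ E, Function.invFunOn f E (f x) = x := fun x hx => hfi.leftInvOn_invFunOn hx
    refine ⟨Function.invFunOn f E, ?_, ?_⟩
    · obtain ⟨F, hF⟩ := hf
      refine ⟨F.image (·⁻¹), ?_⟩
      rintro _ ⟨x, hx, rfl⟩
      obtain ⟨a, ha, e⟩ := hF x hx
      exact ⟨a⁻¹, Finset.mem_image_of_mem _ ha, by rw [hl x hx, e, act_inv]⟩
    · refine ⟨?_, ?_, ?_⟩
      · rintro _ ⟨x, hx, rfl⟩
        rwa [hl x hx]
      · rintro _ ⟨x, hx, rfl⟩ _ ⟨y, hy, rfl⟩ e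
        rw [hl x hx, hl y hy] at e
        rw [e]
      · intro x hx
        exact ⟨f x, ⟨x, hx, rfl⟩, hl x hx⟩
  have h2 : ∃ k, PW k (E \ f '' E) ∧ Set.BijOn k (E \ f '' E) E := by
    obtain ⟨F, hF⟩ := hg
    let B : Set (Fin 3 → ℝ) := E \ f '' E
    let u : B → E := fun x => ⟨x, x.2.1⟩
    let v : E → B := fun x => ⟨g x, hgE x.2, by
      rintro ⟨y, hy, e⟩
      exact hd y hy x x.2 e⟩
    have hu : Function.Injective u := fun x y e => by
      simpa [u, Subtype.ext_iff] using e
    have hv : Function.Injective v := fun x y e => by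
      apply Subtype.ext
      exact hgi x.2 y.2 (congrArg Subtype.val e)
    obtain ⟨h, hb, hR⟩ := Function.Embedding.schroeder_bernstein_of_rel hu hv
      (fun x y => ∃ a ∈ insert 1 (F.image (·⁻¹)), (y : Fin 3 → ℝ) = so3Act x a)
      (fun a => ⟨1, by simp, by simp [u, act_one]⟩)
      (fun b => by
        obtain ⟨a, ha, e⟩ := hF b b.2
        refine ⟨a⁻¹, Finset.mem_insert_of_mem (Finset.mem_image_of_mem _ ha), ?_⟩
        simp only [v]
        rw [e, act_inv])
    refine ⟨fun x => if hx : x ∈ B then (h ⟨x, hx⟩ : Fin 3 → ℝ) else x,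
      ⟨insert 1 (F.image (·⁻¹)), ?_⟩, ?_, ?_, ?_⟩
    · intro x hx
      have : x ∈ B := hx
      simp only [this, dif_pos]
      exact hR ⟨x, hx⟩
    · intro x hx
      have : x ∈ B := hx
      simp only [this, dif_pos]
      exact (h ⟨x, hx⟩).2
    · intro x hx y hy e
      have hx' : x ∈ B := hx
      have hy' : y ∈ B := hy
      simp only [hx', hy', dif_pos] at e
      have := hb.1 (Subtype.ext e)
      simpa using this
    · intro y hy
      obtain ⟨⟨x, hx⟩, e⟩ := hb.2 ⟨y, hy⟩
      refine ⟨x, hx, ?_⟩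
      simp only [hx, dif_pos, e]
  obtain ⟨k, hk, hkb⟩ := h1
  obtain ⟨l, hl, hlb⟩ := h2
  obtain ⟨n, X, a, hX, hXA, hXE, hXd⟩ := pieces hk hkb
  obtain ⟨m, Y, b, hY, hYA, hYE, hYd⟩ := pieces hl hlb
  have sX : ∀ i, X i ⊆ f '' E := fun i => hXA ▸ Set.subset_iUnion X i
  have sY : ∀ i, Y i ⊆ E \ f '' E := fun i => hYA ▸ Set.subset_iUnion Y i
  refine ⟨n, m, X, Y, a, b, fun i => (sX i).trans hA, fun i => (sY i).trans Set.sdiff_subset,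
    hX, hY, ?_, ?_, hXE, hYE, hXd, hYd⟩
  · intro i j
    exact Set.disjoint_sdiff_right.mono (sX i) (sY j)
  · rw [← hXA, ← hYA, Set.union_sdiff_cancel hA]

/-- step 2: free group action gives two injections -/
theorem word_lem (i : Bool) (w : FreeGroup Bool) (h : w.toWord.head? ≠ some (i, true)) :
    ((FreeGroup.of i)⁻¹ * w).toWord.head? = some (i, false) := by
  have : (FreeGroup.of i)⁻¹ * w = FreeGroup.mk ((i, false) :: w.toWord) := by
    conv_lhs => rw [← FreeGroup.mk_toWord (x := w)]
    rfl
  rw [this, FreeGroup.toWord_mk, FreeGroup.IsReduced.reduce_eq]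
  · rfl
  · have hr : FreeGroup.IsReduced w.toWord := FreeGroup.isReduced_toWord
    cases hw : w.toWord with
    | nil => simp
    | cons b L =>
      rw [hw] at hr h
      rw [FreeGroup.isReduced_cons_cons]
      refine ⟨?_, hr⟩
      rcases b with ⟨b1, b2⟩
      cases b2
      · simp
      · simp at h ⊢
        exact fun e => h e.symm

theorem exists_cocycle (φ : FreeGroup Bool →* SO3) (E : Set (Fin 3 → ℝ))
    (hfree : ∀ x ∈ E, ∀ w, so3Act x (φ w) = x → w = 1) :
    ∃ c : (Fin 3 → ℝ) → FreeGroup Bool, ∀ x ∈ E, ∀ w, so3Act x (φ w) ∈ E →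
      c (so3Act x (φ w)) = w⁻¹ * c x := by
  classical
  let S : Setoid (Fin 3 → ℝ) :=
    { r := fun x y => ∃ w, so3Act x (φ w) = y
      iseqv := ⟨fun x => ⟨1, by simp [act_one]⟩,
        fun {x y} ⟨w, h⟩ => ⟨w⁻¹, by rw [← h, map_inv, act_inv]⟩,
        fun {x y z} ⟨w, h⟩ ⟨w', h'⟩ => ⟨w * w', by rw [map_mul, act_mul, h, h']⟩⟩ }
  let rep : (Fin 3 → ℝ) → (Fin 3 → ℝ) := fun x => (Quotient.mk S x).out
  have hrep : ∀ x, ∃ w, so3Act x (φ w) = rep x := fun x =>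
    S.symm' (Quotient.mk_out (s := S) x)
  choose c hc using hrep
  refine ⟨c, fun x hx w hw => ?_⟩
  have e : rep (so3Act x (φ w)) = rep x := by
    have : Quotient.mk S (so3Act x (φ w)) = Quotient.mk S x :=
      Quotient.sound (S.symm' ⟨w, rfl⟩)
    simp only [rep, this]
  have h1 := hc (so3Act x (φ w))
  rw [e, ← hc x, ← act_mul, ← map_mul] at h1
  have h2 : so3Act x (φ (w * c (so3Act x (φ w)) * (c x)⁻¹)) = x := by
    rw [map_mul, act_mul, h1, map_inv, act_inv]
  have := hfree x hx _ h2
  rw [mul_inv_eq_one] at this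
  rw [← this]; group

theorem free_inj (φ : FreeGroup Bool →* SO3) (E : Set (Fin 3 → ℝ))
    (hE : ∀ x ∈ E, ∀ w, so3Act x (φ w) ∈ E)
    (hfree : ∀ x ∈ E, ∀ w, so3Act x (φ w) = x → w = 1) :
    ∃ p : Bool → (Fin 3 → ℝ) → (Fin 3 → ℝ), (∀ i, PW (p i) E ∧ Set.MapsTo (p i) E E ∧
      Set.InjOn (p i) E) ∧ ∀ x ∈ E, ∀ y ∈ E, p true x ≠ p false y := by
  classical
  obtain ⟨c, hc⟩ := exists_cocycle φ E hfree
  let p : Bool → (Fin 3 → ℝ) → (Fin 3 → ℝ) := fun i x =>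
    if (c x).toWord.head? = some (i, true) then x else so3Act x (φ (FreeGroup.of i))
  have h1 : ∀ i x, (c x).toWord.head? = some (i, true) → p i x = x := fun i x h => by simp [p, h]
  have h2 : ∀ i x, (c x).toWord.head? ≠ some (i, true) → p i x = so3Act x (φ (FreeGroup.of i)) :=
    fun i x h => by simp [p, h]
  have h3 : ∀ i, ∀ x ∈ E, (c x).toWord.head? ≠ some (i, true) →
      (c (p i x)).toWord.head? = some (i, false) := by
    intro i x hx h
    rw [h2 i x h, hc x hx _ (hE x hx _)]
    exact word_lem i _ h
  have h4 : ∀ i, ∀ x ∈ E, ∃ b, (c (p i x)).toWord.head? = some (i, b) := by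
    intro i x hx
    by_cases h : (c x).toWord.head? = some (i, true)
    · exact ⟨true, by rw [h1 i x h, h]⟩
    · exact ⟨false, h3 i x hx h⟩
  refine ⟨p, fun i => ⟨⟨{1, φ (FreeGroup.of i)}, ?_⟩, ?_, ?_⟩, ?_⟩
  · intro x hx
    by_cases h : (c x).toWord.head? = some (i, true)
    · exact ⟨1, by simp, by rw [h1 i x h, act_one]⟩
    · exact ⟨_, by simp, h2 i x h⟩
  · intro x hx
    by_cases h : (c x).toWord.head? = some (i, true)
    · rwa [h1 i x h]
    · rw [h2 i x h]
      exact hE x hx _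
  · intro x hx y hy e
    by_cases h : (c x).toWord.head? = some (i, true) <;>
    by_cases h' : (c y).toWord.head? = some (i, true)
    · rwa [h1 i x h, h1 i y h'] at e
    · have := h3 i y hy h'
      rw [← e, h1 i x h, h] at this
      simp at this
    · have := h3 i x hx h
      rw [e, h1 i y h', h'] at this
      simp at this
    · rw [h2 i x h, h2 i y h'] at e
      exact act_inj _ e
  · intro x hx y hy e
    obtain ⟨b, hb⟩ := h4 true x hx
    obtain ⟨b', hb'⟩ := h4 false y hy
    rw [e, hb'] at hb
    simp at hb

/-- absorption -/
theorem absorb (ρ : SO3) (D : Set (Fin 3 → ℝ))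
    (hρ : ∀ n : ℕ, ∀ d ∈ D, so3Act d (ρ ^ (n + 1)) ∉ D) :
    ∃ f, PW f unitSphere ∧ Set.MapsTo f unitSphere (unitSphere \ D) ∧
      Set.InjOn f unitSphere := by
  classical
  let U : Set (Fin 3 → ℝ) := {x | ∃ n : ℕ, ∃ d ∈ D, x = so3Act d (ρ ^ n)}
  have hU : ∀ x ∈ U, so3Act x ρ ∈ U := by
    rintro x ⟨n, d, hd, rfl⟩
    exact ⟨n + 1, d, hd, by rw [pow_succ, act_mul]⟩
  have hDU : D ⊆ U := fun d hd => ⟨0, d, hd, by simp [act_one]⟩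
  refine ⟨fun x => if x ∈ U then so3Act x ρ else x, ⟨{1, ρ}, ?_⟩, ?_, ?_⟩
  · intro x _
    by_cases h : x ∈ U
    · exact ⟨ρ, by simp, by simp [h]⟩
    · exact ⟨1, by simp, by simp [h, act_one]⟩
  · intro x hx
    by_cases h : x ∈ U
    · simp only [h, if_true]
      refine ⟨act_sphere hx _, ?_⟩
      obtain ⟨n, d, hd, rfl⟩ := h
      rw [← act_mul, ← pow_succ]
      exact hρ n d hd
    · simp only [h, if_false]
      exact ⟨hx, fun hd => h (hDU hd)⟩
  · intro x hx y hy e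
    by_cases h : x ∈ U <;> by_cases h' : y ∈ U <;> simp only [h, h', if_true, if_false] at e
    · exact act_inj _ e
    · exact absurd (e ▸ hU x h) h'
    · exact absurd (e ▸ hU y h') h
    · exact e

theorem so3_mul_transpose (A : SO3) :
    (A : Matrix (Fin 3) (Fin 3) ℝ) * (A : Matrix (Fin 3) (Fin 3) ℝ).transpose = 1 := by
  have := (Matrix.mem_orthogonalGroup_iff (Fin 3) ℝ).1 A.1.2
  simpa using this

theorem so3_adjugate (A : SO3) :
    (A : Matrix (Fin 3) (Fin 3) ℝ).adjugate = (A : Matrix (Fin 3) (Fin 3) ℝ).transpose := by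
  have hd : (A : Matrix (Fin 3) (Fin 3) ℝ).det = 1 := A.2
  have h := so3_mul_transpose A
  calc (A : Matrix (Fin 3) (Fin 3) ℝ).adjugate
      = (A : Matrix (Fin 3) (Fin 3) ℝ).adjugate *
        ((A : Matrix (Fin 3) (Fin 3) ℝ) * (A : Matrix (Fin 3) (Fin 3) ℝ).transpose) := by
          rw [h, mul_one]
    _ = _ := by rw [← mul_assoc, Matrix.adjugate_mul, hd, one_smul, one_mul]

theorem cross_vecMul (x y : Fin 3 → ℝ) (M : Matrix (Fin 3) (Fin 3) ℝ) :
    crossProduct (Matrix.vecMul x M) (Matrix.vecMul y M) =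
      Matrix.vecMul (crossProduct x y) M.adjugate.transpose := by
  rw [Matrix.adjugate_fin_three]
  ext i
  fin_cases i <;>
    simp [cross_apply, Matrix.vecMul, dotProduct, Fin.sum_univ_three] <;> ring

theorem act_cross (x y : Fin 3 → ℝ) (A : SO3) :
    crossProduct (so3Act x A) (so3Act y A) = so3Act (crossProduct x y) A := by
  unfold so3Act
  rw [cross_vecMul, so3_adjugate, Matrix.transpose_transpose]

theorem fixed_pair (A : SO3) (hA : A ≠ 1) {x y : Fin 3 → ℝ} (hx : x ∈ unitSphere)
    (hy : y ∈ unitSphere) (fx : so3Act x A = x) (fy : so3Act y A = y) : y = x ∨ y = -x := by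
  by_contra hne
  push Not at hne
  apply hA
  have fn : so3Act (crossProduct x y) A = crossProduct x y := by
    rw [← act_cross, fx, fy]
  have hx' : x ⬝ᵥ x = 1 := by
    simpa [unitSphere, dotProduct, Fin.sum_univ_three, pow_two] using hx
  have hy' : y ⬝ᵥ y = 1 := by
    simpa [unitSphere, dotProduct, Fin.sum_univ_three, pow_two] using hy
  have hn : crossProduct x y ⬝ᵥ crossProduct x y ≠ 0 := by
    rw [cross_dot_cross, hx', hy', dotProduct_comm y x]
    intro h
    have h' : (x ⬝ᵥ y - 1) * (x ⬝ᵥ y + 1) = 0 := by linarith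
    rcases mul_eq_zero.1 h' with h' | h'
    · apply hne.1
      have : (y - x) ⬝ᵥ (y - x) = 0 := by
        simp only [sub_dotProduct, dotProduct_sub, hx', hy', dotProduct_comm y x]
        linarith
      exact sub_eq_zero.1 (dotProduct_self_eq_zero.1 this)
    · apply hne.2
      have : (y + x) ⬝ᵥ (y + x) = 0 := by
        simp only [add_dotProduct, dotProduct_add, hx', hy', dotProduct_comm y x]
        linarith
      exact eq_neg_of_add_eq_zero_left (dotProduct_self_eq_zero.1 this)
  let P : Matrix (Fin 3) (Fin 3) ℝ := ![crossProduct x y, x, y]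
  have hP : P.det ≠ 0 := by
    rw [← triple_product_eq_det]
    exact hn
  have hPA : P * (A : Matrix (Fin 3) (Fin 3) ℝ) = P := by
    funext i
    rw [Matrix.mul_apply_eq_vecMul]
    fin_cases i
    · exact fn
    · exact fx
    · exact fy
  have hu : IsUnit P := (Matrix.isUnit_iff_isUnit_det _).2 hP.isUnit
  have : (A : Matrix (Fin 3) (Fin 3) ℝ) = 1 := hu.mul_left_cancel (by rw [hPA, mul_one])
  apply Subtype.ext
  apply Subtype.ext
  exact this

theorem fixed_countable (A : SO3) (hA : A ≠ 1) :
    {x | x ∈ unitSphere ∧ so3Act x A = x}.Countable := by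
  rcases Set.eq_empty_or_nonempty {x | x ∈ unitSphere ∧ so3Act x A = x} with h | ⟨x, hx, fx⟩
  · rw [h]; exact Set.countable_empty
  · refine Set.Countable.mono (s₂ := {x, -x}) ?_ (Set.toFinite _).countable
    rintro y ⟨hy, fy⟩
    exact fixed_pair A hA hx hy fx fy

/-- integer matrices -/
def N : Bool × Bool → Matrix (Fin 3) (Fin 3) ℤ
  | (true, true) => !![3, -4, 0; 4, 3, 0; 0, 0, 5]
  | (true, false) => !![3, 4, 0; -4, 3, 0; 0, 0, 5]
  | (false, true) => !![5, 0, 0; 0, 3, -4; 0, 4, 3]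
  | (false, false) => !![5, 0, 0; 0, 3, 4; 0, -4, 3]

noncomputable def NR (s : Bool × Bool) : Matrix (Fin 3) (Fin 3) ℝ :=
  Matrix.of fun i j => (N s i j : ℝ) / 5

theorem NR_star (i b : Bool) : star (NR (i, b)) = NR (i, !b) := by
  rw [Matrix.star_eq_conjTranspose]
  ext j k
  cases i <;> cases b <;> fin_cases j <;> fin_cases k <;> simp [NR, N]

theorem NR_mul (i b : Bool) : NR (i, b) * NR (i, !b) = 1 := by
  ext j k
  cases i <;> cases b <;> fin_cases j <;> fin_cases k <;>
    simp [NR, N, Matrix.mul_apply, Fin.sum_univ_three] <;> norm_num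

theorem NR_det (i b : Bool) : (NR (i, b)).det = 1 := by
  rw [Matrix.det_fin_three]
  cases i <;> cases b <;> simp [NR, N] <;> norm_num

noncomputable def gen (i : Bool) : SO3 :=
  ⟨⟨NR (i, true), (Matrix.mem_orthogonalGroup_iff (Fin 3) ℝ).2 (by
    have h := NR_mul i true
    rw [← NR_star] at h
    exact h)⟩, NR_det i true⟩

noncomputable def φ : FreeGroup Bool →* SO3 := FreeGroup.lift gen

theorem letter_val (s : Bool × Bool) :
    ((cond s.2 (gen s.1) (gen s.1)⁻¹ : SO3) : Matrix (Fin 3) (Fin 3) ℝ) = NR s := by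
  rcases s with ⟨i, b⟩
  cases b
  · change star (NR (i, true)) = _
    rw [NR_star]; rfl
  · rfl

def toR (X : Fin 3 → ℤ) : Fin 3 → ℝ := fun i => X i

theorem act_letter (X : Fin 3 → ℤ) (s : Bool × Bool) (c : ℝ) :
    so3Act (c • toR X) (cond s.2 (gen s.1) (gen s.1)⁻¹) =
      (c / 5) • toR (Matrix.vecMul X (N s)) := by
  unfold so3Act
  rw [letter_val]
  ext j
  simp [NR, toR, Matrix.vecMul, dotProduct, Fin.sum_univ_three]
  ring

theorem act_word (L : List (Bool × Bool)) : ∀ (X : Fin 3 → ℤ) (c : ℝ),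
    so3Act (c • toR X) (φ (FreeGroup.mk L)) =
      (c / 5 ^ L.length) • toR (L.foldl (fun Y s => Matrix.vecMul Y (N s)) X) := by
  induction L with
  | nil =>
    intro X c
    have : φ (FreeGroup.mk []) = 1 := map_one φ
    rw [this]
    simp [so3Act]
  | cons s L ih =>
    intro X c
    have : φ (FreeGroup.mk (s :: L)) =
        (cond s.2 (gen s.1) (gen s.1)⁻¹) * φ (FreeGroup.mk L) := by
      simp [φ, FreeGroup.lift_mk]
    have hm : ∀ (v : Fin 3 → ℝ) (A B : SO3), so3Act v (A * B) = so3Act (so3Act v A) B := by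
      intro v A B
      simp [so3Act, Matrix.vecMul_vecMul]
    rw [this, hm, act_letter, ih]
    simp only [List.length_cons, List.foldl_cons]
    congr 1
    rw [pow_succ]
    field_simp

def Bad (X : Fin 3 → ℤ) : Prop := 5 ∣ X 0 ∧ 5 ∣ X 1 ∧ 5 ∣ X 2

theorem step (X : Fin 3 → ℤ) (s t : Bool × Bool) (h : s.1 = t.1 → s.2 = t.2)
    (hb : Bad (Matrix.vecMul (Matrix.vecMul X (N s)) (N t))) : Bad (Matrix.vecMul X (N s)) := by
  rcases s with ⟨i, b⟩
  rcases t with ⟨j, c⟩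
  cases i <;> cases b <;> cases j <;> cases c <;>
    simp [Bad, N, Matrix.vecMul, dotProduct, Fin.sum_univ_three] at h hb ⊢ <;> omega

theorem word_good (L : List (Bool × Bool)) : ∀ (X : Fin 3 → ℤ) (s : Bool × Bool),
    FreeGroup.IsReduced (s :: L) → ¬ Bad (Matrix.vecMul X (N s)) →
    ¬ Bad ((s :: L).foldl (fun Y s => Matrix.vecMul Y (N s)) X) := by
  induction L with
  | nil => intro X s _ h; simpa using h
  | cons t L ih =>
    intro X s hr h
    rw [FreeGroup.isReduced_cons_cons] at hr
    rw [List.foldl_cons]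
    exact ih _ t hr.2 (fun hb => h (step X s t hr.1 hb))

theorem e2_not_fixed (w : FreeGroup Bool) (hw : w ≠ 1) (c : ℝ) (hc : c ≠ 0) :
    so3Act (c • toR ![0, 1, 0]) (φ w) ≠ c • toR ![0, 1, 0] := by
  intro h
  have hr : FreeGroup.IsReduced w.toWord := FreeGroup.isReduced_toWord
  rw [← FreeGroup.mk_toWord (x := w), act_word] at h
  cases hL : w.toWord with
  | nil => exact hw (FreeGroup.toWord_eq_nil_iff.1 hL)
  | cons s L =>
    rw [hL] at h hr
    have hg := word_good L ![0, 1, 0] s hr (by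
      rcases s with ⟨i, b⟩
      cases i <;> cases b <;>
        simp [Bad, N, Matrix.vecMul, dotProduct, Fin.sum_univ_three])
    generalize ((s :: L).foldl (fun Y s => Matrix.vecMul Y (N s)) ![0, 1, 0]) = Z at h hg
    apply hg
    have key : ∀ i, Z i = 5 * (5 ^ L.length * (![0, 1, 0] : Fin 3 → ℤ) i) := by
      intro i
      have := congrFun h i
      simp only [toR, Pi.smul_apply, smul_eq_mul, List.length_cons] at this
      rw [pow_succ] at this
      field_simp at this
      have h2 : ((Z i : ℤ) : ℝ) = ((5 * (5 ^ L.length * (![0, 1, 0] : Fin 3 → ℤ) i) : ℤ) : ℝ) := by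
        push_cast
        linarith
      exact_mod_cast h2
    exact ⟨⟨_, key 0⟩, ⟨_, key 1⟩, ⟨_, key 2⟩⟩

/-- rotation about the second axis -/
def RM (z : ℂ) : Matrix (Fin 3) (Fin 3) ℝ := !![z.re, 0, z.im; 0, 1, 0; -z.im, 0, z.re]

theorem RM_norm (z : ℂ) (hz : z.re ^ 2 + z.im ^ 2 = 1) :
    RM z * star (RM z) = 1 ∧ (RM z).det = 1 := by
  constructor
  · rw [Matrix.star_eq_conjTranspose]
    ext j k
    fin_cases j <;> fin_cases k <;>
      simp [RM, Matrix.mul_apply, Fin.sum_univ_three] <;> linarith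
  · rw [Matrix.det_fin_three]
    simp [RM]
    linarith

def rot (z : ℂ) (hz : z.re ^ 2 + z.im ^ 2 = 1) : SO3 :=
  ⟨⟨RM z, (Matrix.mem_orthogonalGroup_iff (Fin 3) ℝ).2 (RM_norm z hz).1⟩, (RM_norm z hz).2⟩

def toC (v : Fin 3 → ℝ) : ℂ := ⟨v 0, v 2⟩

theorem toC_rot (z : ℂ) (hz : z.re ^ 2 + z.im ^ 2 = 1) (v : Fin 3 → ℝ) :
    toC (so3Act v (rot z hz)) = toC v * z := by
  have : ((rot z hz : SO3) : Matrix (Fin 3) (Fin 3) ℝ) = RM z := rfl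
  unfold so3Act
  rw [this]
  apply Complex.ext <;> simp [toC, RM, Matrix.vecMul, dotProduct, Fin.sum_univ_three] <;> ring

theorem toC_rot_pow (z : ℂ) (hz : z.re ^ 2 + z.im ^ 2 = 1) (v : Fin 3 → ℝ) (n : ℕ) :
    toC (so3Act v (rot z hz ^ n)) = toC v * z ^ n := by
  induction n with
  | zero => simp [so3Act]
  | succ n ih =>
    have hm : ∀ (v : Fin 3 → ℝ) (A B : SO3), so3Act v (A * B) = so3Act (so3Act v A) B := by
      intro v A B
      simp [so3Act, Matrix.vecMul_vecMul]
    rw [pow_succ, hm, toC_rot, ih, pow_succ, mul_assoc]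

theorem circle_uncountable : ¬ {z : ℂ | z.re ^ 2 + z.im ^ 2 = 1}.Countable := by
  intro h
  have h2 : (Set.Icc (0 : ℝ) 1).Countable := by
    refine (h.image Complex.re).mono ?_
    intro t ht
    refine ⟨⟨t, Real.sqrt (1 - t ^ 2)⟩, ?_, rfl⟩
    have : (0 : ℝ) ≤ 1 - t ^ 2 := by nlinarith [ht.1, ht.2]
    change t ^ 2 + Real.sqrt (1 - t ^ 2) ^ 2 = 1
    rw [Real.sq_sqrt this]; ring
  exact (Cardinal.Real.Icc_countable_iff.1 h2).not_gt one_pos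

theorem exists_rot (D : Set (Fin 3 → ℝ)) (hD : D.Countable) (h0 : ∀ d ∈ D, toC d ≠ 0) :
    ∃ ρ : SO3, ∀ n : ℕ, ∀ d ∈ D, so3Act d (ρ ^ (n + 1)) ∉ D := by
  let B : Set ℂ := ⋃ n : ℕ, ⋃ d ∈ D, ⋃ d' ∈ D, {z : ℂ | toC d * z ^ (n + 1) = toC d'}
  have hB : B.Countable := by
    refine Set.countable_iUnion fun n => hD.biUnion fun d hd => hD.biUnion fun d' _ => ?_
    refine Set.Finite.countable ?_
    refine (Polynomial.nthRootsFinset (n + 1) (toC d' / toC d)).finite_toSet.subset ?_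
    intro z hz
    have hz' : toC d * z ^ (n + 1) = toC d' := hz
    have := h0 d hd
    simp only [Finset.mem_coe]
    rw [Polynomial.mem_nthRootsFinset (Nat.succ_pos n), ← hz']
    field_simp
  have : ∃ z : ℂ, z.re ^ 2 + z.im ^ 2 = 1 ∧ z ∉ B := by
    by_contra hcon
    push Not at hcon
    exact circle_uncountable (hB.mono hcon)
  obtain ⟨z, hz, hzB⟩ := this
  refine ⟨rot z hz, fun n d hd hd' => hzB ?_⟩
  simp only [B, Set.mem_iUnion]
  exact ⟨n, d, hd, _, hd', (toC_rot_pow z hz d (n + 1)).symm⟩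

theorem main : IsParadoxical so3Act unitSphere := by
  let D : Set (Fin 3 → ℝ) := {x | x ∈ unitSphere ∧ ∃ w, w ≠ 1 ∧ so3Act x (φ w) = x}
  have hφ : ∀ w, w ≠ 1 → φ w ≠ 1 := by
    intro w hw h
    apply e2_not_fixed w hw 1 one_ne_zero
    rw [h, act_one]
  have hDc : D.Countable := by
    have : D ⊆ ⋃ w : FreeGroup Bool, ⋃ _ : w ≠ 1, {x | x ∈ unitSphere ∧ so3Act x (φ w) = x} := by
      rintro x ⟨hx, w, hw, e⟩
      simp only [Set.mem_iUnion]
      exact ⟨w, hw, hx, e⟩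
    have hc : Countable (FreeGroup Bool) := FreeGroup.toWord_injective.countable
    refine Set.Countable.mono this (Set.countable_iUnion fun w => Set.countable_iUnion fun hw => ?_)
    exact fixed_countable _ (hφ w hw)
  have hD0 : ∀ d ∈ D, toC d ≠ 0 := by
    rintro d ⟨hd, w, hw, e⟩ h
    have h0 : d 0 = 0 := congrArg Complex.re h
    have h2 : d 2 = 0 := congrArg Complex.im h
    have hd1 : d 1 ≠ 0 := by
      intro h1
      have : d 0 ^ 2 + d 1 ^ 2 + d 2 ^ 2 = 1 := hd
      rw [h0, h1, h2] at this
      norm_num at this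
    have hd' : d = d 1 • toR ![0, 1, 0] := by
      ext i
      fin_cases i <;> simp [toR, h0, h2]
    apply e2_not_fixed w hw (d 1) hd1
    rw [← hd']
    exact e
  obtain ⟨ρ, hρ⟩ := exists_rot D hDc hD0
  obtain ⟨f, hf, hfm, hfi⟩ := absorb ρ D hρ
  obtain ⟨p, hp, hpd⟩ := free_inj φ (unitSphere \ D)
    (by
      rintro x ⟨hx, hxD⟩ w
      refine ⟨act_sphere hx _, ?_⟩
      rintro ⟨-, w', hw', e⟩
      apply hxD
      refine ⟨hx, w * w' * w⁻¹, ?_, ?_⟩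
      · intro h
        exact hw' (conj_eq_one_iff.1 h)
      · rw [map_mul, map_mul, act_mul, act_mul, e, map_inv, act_inv])
    (by
      rintro x ⟨hx, hxD⟩ w e
      by_contra hw
      exact hxD ⟨hx, w, hw, e⟩)
  have hm : ∀ i, Set.MapsTo (p i ∘ f) unitSphere unitSphere := fun i x hx =>
    ((hp i).2.1 (hfm hx)).1
  exact paradox_of_inj ((hp true).1.comp hf hfm) ((hp false).1.comp hf hfm) (hm true) (hm false)
    ((hp true).2.2.comp hfi hfm) ((hp false).2.2.comp hfi hfm)
    (fun x hx y hy => hpd _ (hfm hx) _ (hfm hy))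

end BT

/-- Banach–Tarski Paradox for the sphere: the unit sphere `𝕊²` in `ℝ³` is
`SO(3)`-paradoxical. -/
theorem banach_tarski_sphere : IsParadoxical so3Act unitSphere := by
  exact BT.main
end

section
/- The closed unit ball 𝔹³ centred at the origin in ℝ³ is E(3)-paradoxical, where E(3) is the group of isometries of Euclidean space ℝ³ (Banach–Tarski Paradox). -/
abbrev E3 := EuclideanSpace ℝ (Fin 3)

/-- `f` is piecewise given by finitely many isometries on `A`. -/
def PW (f : E3 → E3) (A : Set E3) : Prop :=
  ∃ T : Set (E3 ≃ᵢ E3), T.Finite ∧ ∀ x ∈ A, ∃ g ∈ T, f x = g x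

lemma PW.comp {f h : E3 → E3} {A B : Set E3} (hh : PW h B) (hf : PW f A)
    (hm : Set.MapsTo f A B) : PW (h ∘ f) A := by
  obtain ⟨T, hT, hT'⟩ := hh
  obtain ⟨S, hS, hS'⟩ := hf
  refine ⟨Set.image2 (fun a b => a * b) T S, hT.image2 _ hS, fun x hx => ?_⟩
  obtain ⟨s, hs, hs'⟩ := hS' x hx
  obtain ⟨t, ht, ht'⟩ := hT' (f x) (hm hx)
  exact ⟨t * s, Set.mem_image2_of_mem ht hs, by rw [Function.comp_apply, ht', hs', IsometryEquiv.mul_apply]⟩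

lemma PW.iter {f : E3 → E3} {A : Set E3} (hf : PW f A) (hm : Set.MapsTo f A A) (n : ℕ) :
    PW (f^[n]) A := by
  induction n with
  | zero => exact ⟨{1}, Set.finite_singleton _, fun x _ => ⟨1, rfl, rfl⟩⟩
  | succ n ih => exact ih.comp hf hm

lemma pieces {A E : Set E3} {T : Set (E3 ≃ᵢ E3)} (hT : T.Finite) (k : A → E)
    (hk : Function.Bijective k) (hkT : ∀ a, ∃ g ∈ T, (k a : E3) = g a) :
    ∃ (n : ℕ) (X : Fin n → Set E3) (g : Fin n → E3 ≃ᵢ E3),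
      (∀ i j, i ≠ j → Disjoint (X i) (X j)) ∧ A = (⋃ i, X i) ∧
      E = (⋃ i, (fun x => g i x) '' X i) ∧
      (∀ i j, i ≠ j → Disjoint ((fun x => g i x) '' X i) ((fun x => g j x) '' X j)) := by
  classical
  have := hT.fintype
  let e := Fintype.equivFin T
  choose c hc hc' using hkT
  let X : Fin (Fintype.card T) → Set E3 := fun i => {x | ∃ h : x ∈ A, c ⟨x, h⟩ = e.symm i}
  have hX : ∀ i x (h : x ∈ A), c ⟨x, h⟩ = e.symm i → (k ⟨x, h⟩ : E3) = (e.symm i : E3 ≃ᵢ E3) x := by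
    intro i x h hh
    rw [hc', hh]
  refine ⟨Fintype.card T, X, fun i => e.symm i, ?_, ?_, ?_, ?_⟩
  · intro i j hij
    rw [Set.disjoint_left]
    rintro x ⟨h, h1⟩ ⟨_, h2⟩
    apply hij
    apply e.symm.injective
    apply Subtype.ext
    rw [← h1, ← h2]
  · ext x
    simp only [Set.mem_iUnion]
    constructor
    · intro h
      exact ⟨e ⟨c ⟨x, h⟩, hc _⟩, h, by simp⟩
    · rintro ⟨i, h, _⟩
      exact h
  · ext y
    simp only [Set.mem_iUnion]
    constructor
    · intro h
      obtain ⟨⟨x, hx⟩, hxy⟩ := hk.2 ⟨y, h⟩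
      refine ⟨e ⟨c ⟨x, hx⟩, hc _⟩, x, ⟨hx, by simp⟩, ?_⟩
      have := hc' ⟨x, hx⟩
      rw [hxy] at this
      simp [← this]
    · rintro ⟨i, x, ⟨h, h1⟩, rfl⟩
      have := hX i x h h1
      simp only [← this]
      exact (k ⟨x, h⟩).2
  · intro i j hij
    rw [Set.disjoint_left]
    rintro y ⟨x, ⟨h, h1⟩, rfl⟩ ⟨x', ⟨h', h1'⟩, h2⟩
    have a := hX i x h h1
    have b := hX j x' h' h1'
    simp only at h2
    rw [← a, ← b] at h2
    have := hk.1 (Subtype.ext h2)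
    simp only [Subtype.mk.injEq] at this
    subst this
    apply hij
    apply e.symm.injective
    apply Subtype.ext
    rw [← h1, ← h1']

lemma paradox_of_inj {E : Set E3} {f h : E3 → E3} (hf : PW f E) (hh : PW h E)
    (mf : Set.MapsTo f E E) (mh : Set.MapsTo h E E) (jf : Set.InjOn f E) (jh : Set.InjOn h E)
    (hd : ∀ x ∈ E, ∀ y ∈ E, f x ≠ h y) :
    IsParadoxical (fun (x : E3) (f : E3 ≃ᵢ E3) => f x) E := by
  obtain ⟨T, hT, hT'⟩ := hf
  obtain ⟨S, hS, hS'⟩ := hh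
  have hA : ∃ k : (f '' E : Set E3) → E, Function.Bijective k ∧
      ∀ a, ∃ g ∈ T⁻¹, (k a : E3) = g a := by
    let b : E ≃ (f '' E : Set E3) := Equiv.Set.imageOfInjOn f E jf
    refine ⟨b.symm, b.symm.bijective, fun a => ?_⟩
    obtain ⟨x, rfl⟩ := b.surjective a
    obtain ⟨g, hg, hgx⟩ := hT' x x.2
    refine ⟨g⁻¹, by simpa using hg, ?_⟩
    have : (b x : E3) = g x := hgx
    rw [this, Equiv.symm_apply_apply, ← IsometryEquiv.mul_apply]
    simp
  have hB : ∃ k : (E \ f '' E : Set E3) → E, Function.Bijective k ∧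
      ∀ a, ∃ g ∈ insert 1 S⁻¹, (k a : E3) = g a := by
    refine Function.Embedding.schroeder_bernstein_of_rel
      (f := fun a : (E \ f '' E : Set E3) => (⟨a, a.2.1⟩ : E))
      (g := fun x : E => (⟨h x, mh x.2, ?_⟩ : (E \ f '' E : Set E3))) ?_ ?_
      (fun a x => ∃ g ∈ insert 1 S⁻¹, (x : E3) = g a) ?_ ?_
    · rintro ⟨y, hy, hyx⟩
      exact hd y hy x x.2 hyx
    · intro a b hab
      simpa [Subtype.ext_iff] using hab
    · intro a b hab
      exact Subtype.ext (jh a.2 b.2 (congrArg Subtype.val hab))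
    · intro a
      exact ⟨1, by simp, rfl⟩
    · intro x
      obtain ⟨g, hg, hgx⟩ := hS' x x.2
      refine ⟨g⁻¹, by simp [hg], ?_⟩
      change (x : E3) = g⁻¹ (h x)
      rw [hgx, ← IsometryEquiv.mul_apply]
      simp
  obtain ⟨k, hk, hk'⟩ := hA
  obtain ⟨l, hl, hl'⟩ := hB
  obtain ⟨n, X, g, h1, h2, h3, h4⟩ := pieces hT.inv k hk hk'
  obtain ⟨m, Y, g', h1', h2', h3', h4'⟩ := pieces (hS.inv.insert 1) l hl hl'
  have hXs : ∀ i, X i ⊆ f '' E := fun i => h2 ▸ Set.subset_iUnion X i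
  have hYs : ∀ i, Y i ⊆ E \ f '' E := fun i => h2' ▸ Set.subset_iUnion Y i
  have hfE : f '' E ⊆ E := mf.image_subset
  refine ⟨n, m, X, Y, g, g', fun i => (hXs i).trans hfE, fun i => (hYs i).trans Set.sdiff_subset,
    h1, h1', fun i j => ?_, ?_, h3, h3', h4, h4'⟩
  · exact Set.disjoint_sdiff_right.mono (hXs i) (hYs j)
  · rw [← h2, ← h2', Set.union_sdiff_cancel hfE]

lemma inj_of_cover {E U : Set E3} (hUE : U ⊆ E) {f h : E3 → E3} (hf : PW f U) (hh : PW h U)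
    (mf : Set.MapsTo f U U) (mh : Set.MapsTo h U U) (jf : Set.InjOn f U) (jh : Set.InjOn h U)
    (hd : ∀ x ∈ U, ∀ y ∈ U, f x ≠ h y) {n : ℕ} (g : Fin n → E3 ≃ᵢ E3)
    (hg : ∀ x ∈ E, ∃ i, g i x ∈ U) :
    IsParadoxical (fun (x : E3) (f : E3 ≃ᵢ E3) => f x) E := by
  classical
  have hidx : ∀ x, ∃ i : ℕ, x ∈ E → ∃ h : i < n, g ⟨i, h⟩ x ∈ U := by
    intro x
    by_cases hx : x ∈ E
    · obtain ⟨i, hi⟩ := hg x hx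
      exact ⟨i, fun _ => ⟨i.2, hi⟩⟩
    · exact ⟨0, fun h => absurd h hx⟩
  choose c hc using hidx
  let φ : E3 → E3 := fun x => if hx : x ∈ E then h^[c x] (f (g ⟨c x, (hc x hx).1⟩ x)) else x
  have hφ : ∀ x (hx : x ∈ E), φ x = h^[c x] (f (g ⟨c x, (hc x hx).1⟩ x)) := by
    intro x hx
    simp [φ, hx]
  have mφ : Set.MapsTo φ E U := by
    intro x hx
    rw [hφ x hx]
    exact (mh.iterate _) (mf (hc x hx).2)
  have key : ∀ i j : ℕ, ∀ x ∈ U, ∀ y ∈ U, h^[i] (f x) = h^[j] (f y) → i = j ∧ x = y := by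
    intro i
    induction i with
    | zero =>
      intro j x hx y hy hxy
      cases j with
      | zero => exact ⟨rfl, jf hx hy hxy⟩
      | succ j =>
        rw [Function.iterate_succ_apply'] at hxy
        exact absurd hxy (hd x hx _ (mh.iterate j (mf hy)))
    | succ i ih =>
      intro j x hx y hy hxy
      cases j with
      | zero =>
        rw [Function.iterate_succ_apply'] at hxy
        exact absurd hxy.symm (hd y hy _ (mh.iterate i (mf hx)))
      | succ j =>
        rw [Function.iterate_succ_apply', Function.iterate_succ_apply'] at hxy
        obtain ⟨h1, h2⟩ := ih j x hx y hy (jh (mh.iterate i (mf hx)) (mh.iterate j (mf hy)) hxy)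
        exact ⟨by rw [h1], h2⟩
  have jφ : Set.InjOn φ E := by
    intro x hx y hy hxy
    rw [hφ x hx, hφ y hy] at hxy
    obtain ⟨h1, h2⟩ := key _ _ _ (hc x hx).2 _ (hc y hy).2 hxy
    have h3 : (⟨c x, (hc x hx).1⟩ : Fin n) = ⟨c y, (hc y hy).1⟩ := Fin.ext h1
    rw [h3] at h2
    exact (g _).injective h2
  have pφ : PW φ E := by
    have hp : ∀ i : ℕ, PW (h^[i] ∘ f) U := fun i => (hh.iter mh i).comp hf mf
    choose T hT hT' using hp
    refine ⟨⋃ i : Fin n, (fun t => t * g i) '' T i, Set.finite_iUnion fun i => (hT i).image _, ?_⟩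
    intro x hx
    obtain ⟨t, ht, htx⟩ := hT' (c x) _ (hc x hx).2
    refine ⟨t * g ⟨c x, (hc x hx).1⟩, Set.mem_iUnion.2 ⟨⟨c x, (hc x hx).1⟩, t, ht, rfl⟩, ?_⟩
    rw [hφ x hx, IsometryEquiv.mul_apply]
    exact htx
  exact paradox_of_inj (hf.comp pφ mφ) (hh.comp pφ mφ) (fun x hx => hUE (mf (mφ hx)))
    (fun x hx => hUE (mh (mφ hx))) (jf.comp jφ mφ) (jh.comp jφ mφ)
    (fun x hx y hy => hd _ (mφ hx) _ (mφ hy))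

lemma free_paradox (Ψ : FreeGroup Bool →* (E3 ≃ᵢ E3)) (U : Set E3)
    (hU : ∀ g, ∀ x ∈ U, Ψ g x ∈ U) (hfree : ∀ g, ∀ x ∈ U, Ψ g x = x → g = 1) :
    ∃ f : Bool → E3 → E3, (∀ a, PW (f a) U) ∧ (∀ a, Set.MapsTo (f a) U U) ∧
      (∀ a, Set.InjOn (f a) U) ∧ ∀ x ∈ U, ∀ y ∈ U, f true x ≠ f false y := by
  classical
  let s : Setoid E3 :=
    { r := fun x y => ∃ g, Ψ g x = y
      iseqv :=
        { refl := fun x => ⟨1, by simp⟩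
          symm := by
            rintro x _ ⟨g, rfl⟩
            exact ⟨g⁻¹, by rw [← IsometryEquiv.mul_apply, ← map_mul]; simp⟩
          trans := by
            rintro x _ _ ⟨g, rfl⟩ ⟨g', rfl⟩
            exact ⟨g' * g, by rw [← IsometryEquiv.mul_apply, ← map_mul]⟩ } }
  let r : E3 → E3 := fun x => (Quotient.mk s x).out
  have hr : ∀ x, ∃ g, Ψ g (r x) = x := fun x => Quotient.mk_out (s := s) x
  have hr' : ∀ x g, r (Ψ g x) = r x := by
    intro x g
    have : Quotient.mk s (Ψ g x) = Quotient.mk s x :=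
      (Quotient.sound (s := s) (show ∃ g', Ψ g' x = Ψ g x from ⟨g, rfl⟩)).symm
    simp only [r, this]
  choose w hw using hr
  have hrU : ∀ x ∈ U, r x ∈ U := by
    intro x hx
    have := hU (w x)⁻¹ x hx
    rw [← hw x, ← IsometryEquiv.mul_apply, ← map_mul] at this
    simpa [hw] using this
  have hwm : ∀ x ∈ U, ∀ g, w (Ψ g x) = g * w x := by
    intro x hx g
    have h1 := hw (Ψ g x)
    rw [hr'] at h1
    have h2 : Ψ (g * w x) (r x) = Ψ g x := by
      rw [map_mul, IsometryEquiv.mul_apply, hw]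
    have h3 : Ψ ((g * w x)⁻¹ * w (Ψ g x)) (r x) = r x := by
      rw [map_mul, IsometryEquiv.mul_apply, h1, ← h2, ← IsometryEquiv.mul_apply, ← map_mul]
      simp
    have := hfree _ _ (hrU x hx) h3
    exact (inv_mul_eq_one.1 this).symm
  let f : Bool → E3 → E3 := fun a x =>
    if w x ∈ FreeGroup.startsWith (a, true) then x else Ψ (FreeGroup.mk [(a, false)]) x
  have hf1 : ∀ a x, w x ∈ FreeGroup.startsWith (a, true) → f a x = x := by
    intro a x h; simp only [f, if_pos h]
  have hf2 : ∀ a x, w x ∉ FreeGroup.startsWith (a, true) →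
      f a x = Ψ (FreeGroup.mk [(a, false)]) x := by
    intro a x h; simp only [f, if_neg h]
  have hf3 : ∀ a, ∀ x ∈ U, w x ∉ FreeGroup.startsWith (a, true) →
      w (f a x) ∈ FreeGroup.startsWith (a, false) := by
    intro a x hx h
    rw [hf2 a x h, hwm x hx]
    exact FreeGroup.startsWith_mk_mul _ (by simpa using h)
  have hne : ∀ {p q : Bool × Bool} {v : FreeGroup Bool}, v ∈ FreeGroup.startsWith p →
      v ∈ FreeGroup.startsWith q → p = q := by
    intro p q v h1 h2
    simp only [FreeGroup.startsWith, Set.mem_ofPred_eq] at h1 h2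
    rw [h1] at h2
    exact Option.some.inj h2
  have hf4 : ∀ a, ∀ x ∈ U, ∃ b, w (f a x) ∈ FreeGroup.startsWith (a, b) := by
    intro a x hx
    by_cases h : w x ∈ FreeGroup.startsWith (a, true)
    · exact ⟨true, by rw [hf1 a x h]; exact h⟩
    · exact ⟨false, hf3 a x hx h⟩
  refine ⟨f, ?_, ?_, ?_, ?_⟩
  · intro a
    refine ⟨{1, Ψ (FreeGroup.mk [(a, false)])}, by simp, fun x hx => ?_⟩
    by_cases h : w x ∈ FreeGroup.startsWith (a, true)
    · exact ⟨1, by simp, by rw [hf1 a x h]; rfl⟩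
    · exact ⟨_, by simp, hf2 a x h⟩
  · intro a x hx
    by_cases h : w x ∈ FreeGroup.startsWith (a, true)
    · rw [hf1 a x h]; exact hx
    · rw [hf2 a x h]; exact hU _ x hx
  · intro a x hx y hy hxy
    by_cases h : w x ∈ FreeGroup.startsWith (a, true) <;>
      by_cases h' : w y ∈ FreeGroup.startsWith (a, true)
    · rwa [hf1 a x h, hf1 a y h'] at hxy
    · have := hf3 a y hy h'
      rw [← hxy, hf1 a x h] at this
      simpa using hne h this
    · have := hf3 a x hx h
      rw [hxy, hf1 a y h'] at this
      simpa using hne h' this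
    · rw [hf2 a x h, hf2 a y h'] at hxy
      exact (Ψ _).injective hxy
  · intro x hx y hy hxy
    obtain ⟨b, hb⟩ := hf4 true x hx
    obtain ⟨b', hb'⟩ := hf4 false y hy
    rw [hxy] at hb
    simpa using hne hb hb'

noncomputable def tclm : Matrix (Fin 3) (Fin 3) ℝ →⋆* (E3 →L[ℝ] E3) where
  toMonoidHom := MonoidHomClass.toMonoidHom (Matrix.toEuclideanCLM (n := Fin 3) (𝕜 := ℝ))
  map_star' a := map_star (Matrix.toEuclideanCLM (n := Fin 3) (𝕜 := ℝ)) a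

noncomputable def isoR : Matrix.orthogonalGroup (Fin 3) ℝ →* (E3 ≃ᵢ E3) :=
  MonoidHom.mk' (fun M => (Unitary.linearIsometryEquiv (𝕜 := ℝ) (H := E3)
    (Unitary.map tclm M)).toIsometryEquiv) (by
      intro a b
      rw [map_mul, map_mul]
      rfl)

lemma isoR_apply (M : Matrix.orthogonalGroup (Fin 3) ℝ) (x : E3) :
    (isoR M x).ofLp = M.1.mulVec x.ofLp := rfl

lemma isoR_norm (M : Matrix.orthogonalGroup (Fin 3) ℝ) (x : E3) : ‖isoR M x‖ = ‖x‖ :=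
  LinearIsometryEquiv.norm_map
    (Unitary.linearIsometryEquiv (𝕜 := ℝ) (H := E3) (Unitary.map tclm M)) x

noncomputable def toR : Matrix.orthogonalGroup (Fin 3) ℚ →* Matrix.orthogonalGroup (Fin 3) ℝ :=
  MonoidHom.mk' (fun M => ⟨M.1.map (algebraMap ℚ ℝ), by
    have h := (Matrix.mem_orthogonalGroup_iff (Fin 3) ℚ).1 M.2
    rw [Matrix.mem_orthogonalGroup_iff]
    have h2 := congrArg (fun A => A.map (algebraMap ℚ ℝ)) h
    simp only [Matrix.map_mul] at h2
    rw [← Matrix.transpose_map, h2]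
    simp⟩) (by
      intro a b
      apply Subtype.ext
      simp [Matrix.map_mul])

/-- the bad set: real multiples of rational vectors -/
def D0 : Set E3 := {x | ∃ (t : ℝ) (q : Fin 3 → ℚ), ∀ i, x i = t * q i}

lemma D0_inv (M : Matrix.orthogonalGroup (Fin 3) ℚ) (x : E3) (hx : x ∈ D0) :
    isoR (toR M) x ∈ D0 := by
  obtain ⟨t, q, h⟩ := hx
  refine ⟨t, M.1.mulVec q, fun i => ?_⟩
  rw [isoR_apply]
  simp only [Matrix.mulVec, dotProduct, toR, MonoidHom.mk'_apply, Matrix.map_apply, h]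
  push_cast
  rw [Finset.mul_sum]
  refine Finset.sum_congr rfl fun j _ => ?_
  simp
  ring

lemma D0_of_fixed (M : Matrix.orthogonalGroup (Fin 3) ℚ) (hM : M * M ≠ 1) (x : E3)
    (hx : isoR (toR M) x = x) : x ∈ D0 := by
  have hx' : isoR (toR M⁻¹) x = x := by
    conv_lhs => rw [← hx]
    rw [← IsometryEquiv.mul_apply, ← map_mul, ← map_mul]
    simp
  have e1 : ∀ i, ∑ j, (M.1 i j : ℝ) * x j = x i := fun i => congrFun (congrArg WithLp.ofLp hx) i
  have e2 : ∀ i, ∑ j, (M.1 j i : ℝ) * x j = x i := fun i => congrFun (congrArg WithLp.ofLp hx') i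
  have hne : ¬ (M.1 0 1 = M.1 1 0 ∧ M.1 0 2 = M.1 2 0 ∧ M.1 1 2 = M.1 2 1) := by
    rintro ⟨h1, h2, h3⟩
    apply hM
    have : M⁻¹ = M := by
      apply Subtype.ext
      ext i j
      change M.1 j i = M.1 i j
      fin_cases i <;> fin_cases j <;> simp [h1, h2, h3]
    nth_rewrite 1 [← this]
    simp
  have a0 := e1 0
  have a1 := e1 1
  have a2 := e1 2
  have b0 := e2 0
  have b1 := e2 1
  have b2 := e2 2
  simp only [Fin.sum_univ_three] at a0 a1 a2 b0 b1 b2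
  have c0 : ((M.1 0 1 - M.1 1 0 : ℚ) : ℝ) * x 1 + ((M.1 0 2 - M.1 2 0 : ℚ) : ℝ) * x 2 = 0 := by
    push_cast; linarith
  have c1 : -((M.1 0 1 - M.1 1 0 : ℚ) : ℝ) * x 0 + ((M.1 1 2 - M.1 2 1 : ℚ) : ℝ) * x 2 = 0 := by
    push_cast; linarith
  have c2 : ((M.1 0 2 - M.1 2 0 : ℚ) : ℝ) * x 0 + ((M.1 1 2 - M.1 2 1 : ℚ) : ℝ) * x 1 = 0 := by
    push_cast; linarith
  have hne' : ¬ (M.1 0 1 - M.1 1 0 = 0 ∧ M.1 0 2 - M.1 2 0 = 0 ∧ M.1 1 2 - M.1 2 1 = 0) := by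
    simpa only [sub_eq_zero] using hne
  generalize M.1 0 1 - M.1 1 0 = p at *
  generalize M.1 0 2 - M.1 2 0 = q at *
  generalize M.1 1 2 - M.1 2 1 = r at *
  by_cases hp : p = 0
  · by_cases hq : q = 0
    · have hr : (r : ℝ) ≠ 0 := by
        intro h
        exact hne' ⟨hp, hq, by exact_mod_cast h⟩
      refine ⟨x 0, ![1, 0, 0], ?_⟩
      intro i
      fin_cases i
      · simp
      · simpa [hp, hq, hr] using c2
      · simpa [hp, hq, hr] using c1
    · have hq' : (q : ℝ) ≠ 0 := by exact_mod_cast hq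
      refine ⟨x 1, ![-r / q, 1, -p / q], ?_⟩
      intro i
      fin_cases i
      · simp; field_simp; linarith
      · simp
      · simp; field_simp; linarith
  · have hp' : (p : ℝ) ≠ 0 := by exact_mod_cast hp
    refine ⟨x 2, ![r / p, -q / p, 1], ?_⟩
    intro i
    fin_cases i
    · simp; field_simp; linarith
    · simp; field_simp; linarith
    · simp

def genM : Bool → Matrix (Fin 3) (Fin 3) ℚ
  | true => !![1, 0, 0; 0, 3/5, -4/5; 0, 4/5, 3/5]
  | false => !![3/5, -4/5, 0; 4/5, 3/5, 0; 0, 0, 1]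

def gen (b : Bool) : Matrix.orthogonalGroup (Fin 3) ℚ := ⟨genM b, by
  rw [Matrix.mem_orthogonalGroup_iff]
  cases b <;> ext i j <;> fin_cases i <;> fin_cases j <;>
    simp [genM, Matrix.mul_apply, Fin.sum_univ_three] <;> norm_num⟩

def psi : FreeGroup Bool →* Matrix.orthogonalGroup (Fin 3) ℚ := FreeGroup.lift gen

def Zm : Bool × Bool → Matrix (Fin 3) (Fin 3) ℤ
  | (true, true) => !![5, 0, 0; 0, 3, -4; 0, 4, 3]
  | (true, false) => !![5, 0, 0; 0, 3, 4; 0, -4, 3]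
  | (false, true) => !![3, -4, 0; 4, 3, 0; 0, 0, 5]
  | (false, false) => !![3, 4, 0; -4, 3, 0; 0, 0, 5]

def uv : Bool × Bool → Fin 3 → ZMod 5
  | (true, true) => ![0, 3, 4]
  | (true, false) => ![0, 3, 1]
  | (false, true) => ![3, 4, 0]
  | (false, false) => ![3, 1, 0]

def vv : Bool × Bool → Fin 3 → ZMod 5
  | (true, true) => ![0, 1, 2]
  | (true, false) => ![0, 1, 3]
  | (false, true) => ![1, 2, 0]
  | (false, false) => ![1, 3, 0]

lemma Zm_mod (s : Bool × Bool) :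
    (Zm s).map (Int.castRingHom (ZMod 5)) = Matrix.vecMulVec (uv s) (vv s) := by
  rcases s with ⟨_ | _, _ | _⟩ <;> ext i j <;> fin_cases i <;> fin_cases j <;>
    simp [Zm, uv, vv, Matrix.vecMulVec_apply] <;> decide

instance inst_s17 : Fact (Nat.Prime 5) := ⟨by norm_num⟩

lemma vu_ne : ∀ s t : Bool × Bool, (s.1 = t.1 → s.2 = t.2) → vv s ⬝ᵥ uv t ≠ 0 := by
  decide

lemma uv_ne : ∀ s, uv s ≠ 0 := by decide
lemma vv_ne : ∀ s, vv s ≠ 0 := by decide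

lemma word_mod (L : List (Bool × Bool)) : ∀ s, FreeGroup.IsReduced (s :: L) →
    ∃ w : Fin 3 → ZMod 5, w ≠ 0 ∧
      (((s :: L).map Zm).prod).map (Int.castRingHom (ZMod 5)) = Matrix.vecMulVec (uv s) w := by
  induction L with
  | nil => exact fun s _ => ⟨vv s, vv_ne s, by simp only [List.map_cons, List.map_nil, List.prod_cons, List.prod_nil, mul_one, Zm_mod]⟩
  | cons t L ih =>
    intro s h
    rw [FreeGroup.isReduced_cons_cons] at h
    obtain ⟨w, hw, e⟩ := ih t h.2
    refine ⟨(vv s ⬝ᵥ uv t) • w, smul_ne_zero (vu_ne s t h.1) hw, ?_⟩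
    rw [List.map_cons, List.prod_cons, Matrix.map_mul, e, Zm_mod, Matrix.vecMulVec_mul_vecMulVec]
    

lemma Zm_eq (s : Bool × Bool) :
    (Zm s).map (Int.castRingHom ℚ) = (5 : ℚ) • (cond s.2 (gen s.1) (gen s.1)⁻¹).1 := by
  have hinv : ∀ b, ((gen b)⁻¹).1 = (genM b).transpose := fun b => rfl
  have hg : ∀ b, (gen b).1 = genM b := fun b => rfl
  rcases s with ⟨_ | _, _ | _⟩ <;> simp only [cond, hinv, hg] <;>
    ext i j <;> fin_cases i <;> fin_cases j <;> norm_num [Zm, genM]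

lemma word_eq (L : List (Bool × Bool)) :
    ((L.map Zm).prod).map (Int.castRingHom ℚ) = (5 : ℚ) ^ L.length • (psi (FreeGroup.mk L)).1 := by
  rw [psi, FreeGroup.lift_mk]
  induction L with
  | nil => simp
  | cons s L ih =>
    simp only [List.map_cons, List.prod_cons, Matrix.map_mul, ih, Zm_eq, List.length_cons]
    rw [Submonoid.coe_mul, smul_mul_smul_comm, pow_succ']

lemma psi_inj (g : FreeGroup Bool) (h : psi g = 1) : g = 1 := by
  rw [← FreeGroup.toWord_eq_nil_iff]
  have hr := FreeGroup.isReduced_toWord (x := g)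
  have he := word_eq g.toWord
  rw [FreeGroup.mk_toWord, h] at he
  generalize g.toWord = L at *
  cases L with
  | nil => rfl
  | cons s L =>
    exfalso
    obtain ⟨w, hw, e⟩ := word_mod L s hr
    have h5 : ((s :: L).map Zm).prod = (5 : ℤ) ^ (s :: L).length • (1 : Matrix (Fin 3) (Fin 3) ℤ) := by
      ext i j
      have := congrFun (congrFun he i) j
      rw [Matrix.map_apply] at this
      have h6 : ((((s :: L).map Zm).prod i j : ℤ) : ℚ) =
          (((5 : ℤ) ^ (s :: L).length • (1 : Matrix (Fin 3) (Fin 3) ℤ)) i j : ℤ) := by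
        refine this.trans ?_
        rw [Matrix.smul_apply, Matrix.smul_apply]
        by_cases hij : i = j <;> simp [Matrix.one_apply, hij]
      exact_mod_cast h6
    have h0 : (((s :: L).map Zm).prod).map (Int.castRingHom (ZMod 5)) = 0 := by
      rw [h5]
      ext i j
      have : (5 : ZMod 5) = 0 := by decide
      rw [Matrix.map_apply, Matrix.smul_apply, smul_eq_mul, List.length_cons, map_mul, map_pow]
      simp [this]
    rw [h0] at e
    obtain ⟨i, hi⟩ := Function.ne_iff.1 (uv_ne s)
    obtain ⟨j, hj⟩ := Function.ne_iff.1 hw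
    have := congrFun (congrFun e i) j
    rw [Matrix.vecMulVec_apply] at this
    exact mul_ne_zero hi hj this.symm

lemma irr2 {p q : ℚ} (h : (p : ℝ) + q * √2 = 0) : p = 0 ∧ q = 0 := by
  have hq : q = 0 := by
    by_contra hq
    have hq' : (q : ℝ) ≠ 0 := by exact_mod_cast hq
    apply irrational_sqrt_two
    refine ⟨-p / q, ?_⟩
    push_cast
    field_simp
    linarith
  subst hq
  refine ⟨?_, rfl⟩
  simpa using h

/-- key computation -/
lemma rat_key {a b : ℚ} {s t : ℝ} {p q : ℚ} (ht : t ≠ 0)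
    (h1 : t * (a - 2 * √2 * b) = s * p) (h2 : t * (2 * √2 * a + b) = s * q) :
    a = 0 ∧ b = 0 := by
  have h3 : t * ((a - 2 * √2 * b) * q - (2 * √2 * a + b) * p) = 0 := by
    linear_combination q * h1 - p * h2
  have h4 := (mul_eq_zero.1 h3).resolve_left ht
  have h5 : ((a * q - b * p : ℚ) : ℝ) + ((-2 * (b * q + a * p) : ℚ) : ℝ) * √2 = 0 := by
    push_cast
    linear_combination h4
  obtain ⟨h6, h7⟩ := irr2 h5
  have h8 : (a ^ 2 + b ^ 2) * (p ^ 2 + q ^ 2) = 0 := by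
    linear_combination (a * q - b * p) * h6 - (b * q + a * p) / 2 * h7
  rcases mul_eq_zero.1 h8 with h | h
  · exact ⟨by nlinarith [sq_nonneg a, sq_nonneg b], by nlinarith [sq_nonneg a, sq_nonneg b]⟩
  · have hp : p = 0 := by nlinarith [sq_nonneg p, sq_nonneg q]
    have hq : q = 0 := by nlinarith [sq_nonneg p, sq_nonneg q]
    rw [hp, Rat.cast_zero, mul_zero] at h1
    rw [hq, Rat.cast_zero, mul_zero] at h2
    have h1' := (mul_eq_zero.1 h1).resolve_left ht
    have h2' := (mul_eq_zero.1 h2).resolve_left ht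
    have := irr2 (p := b) (q := 2 * a) (by push_cast; linear_combination h2')
    exact ⟨by linarith [this.2], this.1⟩

lemma sq2 : √2 * √2 = (2 : ℝ) := Real.mul_self_sqrt (by norm_num)

noncomputable def Rz : Matrix.orthogonalGroup (Fin 3) ℝ :=
  ⟨!![1/3, -(2 * √2)/3, 0; 2 * √2/3, 1/3, 0; 0, 0, 1], by
    rw [Matrix.mem_orthogonalGroup_iff]
    ext i j
    fin_cases i <;> fin_cases j <;>
      simp [Matrix.mul_apply, Fin.sum_univ_three] <;> nlinarith [sq2]⟩

noncomputable def Rx : Matrix.orthogonalGroup (Fin 3) ℝ :=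
  ⟨!![1, 0, 0; 0, 1/3, -(2 * √2)/3; 0, 2 * √2/3, 1/3], by
    rw [Matrix.mem_orthogonalGroup_iff]
    ext i j
    fin_cases i <;> fin_cases j <;>
      simp [Matrix.mul_apply, Fin.sum_univ_three] <;> nlinarith [sq2]⟩

noncomputable def vtr : E3 := !₂[1/2, √2/2, 0]

lemma vtr_norm : ‖vtr‖ ≤ 1 := by
  rw [EuclideanSpace.norm_eq, Real.sqrt_le_left (by norm_num)]
  simp [vtr, Fin.sum_univ_three]
  nlinarith [sq2]

lemma vtr_D0 : vtr ∉ D0 := by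
  rintro ⟨t, q, h⟩
  have h0 := h 0
  have h1 := h 1
  simp [vtr] at h0 h1
  have h2 : ((-q 1 : ℚ) : ℝ) + (q 0 : ℚ) * √2 = 0 := by
    have ht : t ≠ 0 := by rintro rfl; norm_num at h0
    have : t * (((-q 1 : ℚ) : ℝ) + (q 0 : ℚ) * √2) = 0 := by
      push_cast
      linear_combination h1 - √2 * h0
    exact (mul_eq_zero.1 this).resolve_left ht
  rw [(irr2 h2).2] at h0
  norm_num at h0

lemma Rz_D0 (t : ℝ) (ht : t ≠ 0) (q : Fin 3 → ℚ) (hq : ¬ (q 0 = 0 ∧ q 1 = 0)) (x : E3)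
    (hx : ∀ i, x i = t * q i) : isoR Rz x ∉ D0 := by
  rintro ⟨s, p, h⟩
  have h0 := h 0
  have h1 := h 1
  rw [isoR_apply] at h0 h1
  simp [Rz, Matrix.mulVec, dotProduct, Fin.sum_univ_three, hx] at h0 h1
  apply hq
  exact rat_key (s := 3 * s) (p := p 0) (q := p 1) ht (by linear_combination 3 * h0)
    (by linear_combination 3 * h1)

lemma Rx_D0 (t : ℝ) (ht : t ≠ 0) (q : Fin 3 → ℚ) (hq : ¬ (q 1 = 0 ∧ q 2 = 0)) (x : E3)
    (hx : ∀ i, x i = t * q i) : isoR Rx x ∉ D0 := by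
  rintro ⟨s, p, h⟩
  have h0 := h 1
  have h1 := h 2
  rw [isoR_apply] at h0 h1
  simp [Rx, Matrix.mulVec, dotProduct, Fin.sum_univ_three, hx] at h0 h1
  apply hq
  exact rat_key (s := 3 * s) (p := p 1) (q := p 2) ht (by linear_combination 3 * h0)
    (by linear_combination 3 * h1)

/-- Banach–Tarski Paradox: the closed unit ball `𝔹³` centred at the origin of Euclidean
space `ℝ³` is paradoxical for the group `E(3)` of isometries of `ℝ³` (acting on `ℝ³` by
evaluation). -/
theorem banach_tarski_ball :
    IsParadoxical
      (fun (x : EuclideanSpace ℝ (Fin 3))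
        (f : EuclideanSpace ℝ (Fin 3) ≃ᵢ EuclideanSpace ℝ (Fin 3)) => f x)
      (Metric.closedBall (0 : EuclideanSpace ℝ (Fin 3)) 1) := by
  obtain ⟨f, hf1, hf2, hf3, hf4⟩ := free_paradox ((isoR.comp toR).comp psi)
    (Metric.closedBall 0 1 \ D0) (by
      rintro g x ⟨hx, hxD⟩
      refine ⟨?_, fun h => hxD ?_⟩
      · rw [mem_closedBall_zero_iff] at hx ⊢
        exact (isoR_norm _ x).trans_le hx
      · have h2 := D0_inv (psi g⁻¹) _ h
        change isoR (toR (psi g⁻¹)) (isoR (toR (psi g)) x) ∈ D0 at h2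
        rw [← IsometryEquiv.mul_apply, ← map_mul, ← map_mul, ← map_mul] at h2
        simpa using h2) (by
      rintro g x ⟨hx, hxD⟩ h
      by_contra hg
      refine hxD (D0_of_fixed (psi g) (fun h2 => hg ?_) x h)
      rw [← map_mul] at h2
      have h3 := psi_inj _ h2
      rw [← pow_two] at h3
      exact (pow_eq_one_iff_left (two_ne_zero)).1 h3)
  refine inj_of_cover (U := Metric.closedBall 0 1 \ D0) Set.sdiff_subset (hf1 true) (hf1 false)
    (hf2 true) (hf2 false) (hf3 true) (hf3 false) hf4
    ![1, isoR Rz, isoR Rx, IsometryEquiv.addRight vtr] ?_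
  intro x hx
  have hx' := mem_closedBall_zero_iff.1 hx
  have hR : ∀ M, isoR M x ∈ Metric.closedBall (0 : E3) 1 := by
    intro M
    rw [mem_closedBall_zero_iff, isoR_norm]
    exact hx'
  by_cases hD : x ∈ D0
  · by_cases h0 : x = 0
    · refine ⟨3, ?_⟩
      have : (![1, isoR Rz, isoR Rx, IsometryEquiv.addRight vtr] : Fin 4 → E3 ≃ᵢ E3) 3 x = vtr := by
        simp [h0]
      rw [this]
      exact ⟨mem_closedBall_zero_iff.2 vtr_norm, vtr_D0⟩
    · obtain ⟨t, q, h⟩ := hD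
      have ht : t ≠ 0 := by
        rintro rfl
        apply h0
        ext i
        simp [h]
      by_cases h1 : q 0 = 0 ∧ q 1 = 0
      · refine ⟨2, hR Rx, Rx_D0 t ht q (fun h2 => h0 ?_) x h⟩
        ext i
        rw [h]
        fin_cases i <;> simp [h1, h2]
      · exact ⟨1, hR Rz, Rz_D0 t ht q h1 x h⟩
  · exact ⟨0, hx, hD⟩
end

section
/- If a group G does not satisfy the Følner condition, then G is paradoxical. Equivalently, if G is non-paradoxical then G satisfies the Følner condition. -/
open scoped Classical

/-- A group `G` is paradoxical: there are pairwise disjoint subsets `X₁,…,Xₙ, Y₁,…,Yₘ`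
of `G` and elements `g₁,…,gₙ, h₁,…,hₘ` such that
`G = (⨆ Xᵢ) ⊔ (⨆ Yⱼ) = ⨆ Xᵢgᵢ = ⨆ Yⱼhⱼ`, all indicated unions being disjoint. -/
def IsParadoxicalGroup (G : Type*) [Group G] : Prop :=
  ∃ (n m : ℕ) (X : Fin n → Set G) (Y : Fin m → Set G) (g : Fin n → G) (h : Fin m → G),
    (∀ i j, i ≠ j → Disjoint (X i) (X j)) ∧
    (∀ i j, i ≠ j → Disjoint (Y i) (Y j)) ∧
    (∀ i j, Disjoint (X i) (Y j)) ∧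
    ((⋃ i, X i) ∪ ⋃ j, Y j) = Set.univ ∧
    (⋃ i, (· * g i) '' X i) = Set.univ ∧
    (⋃ j, (· * h j) '' Y j) = Set.univ ∧
    (∀ i j, i ≠ j → Disjoint ((· * g i) '' X i) ((· * g j) '' X j)) ∧
    (∀ i j, i ≠ j → Disjoint ((· * h i) '' Y i) ((· * h j) '' Y j))

open scoped Pointwise in
theorem expand_aux {G : Type*} [Group G] (h : ¬ FolnerCondition G) :
    ∃ T : Finset G, (1 : G) ∈ T ∧ ∀ F : Finset G, 2 * F.card ≤ (F * T).card := by
  unfold FolnerCondition at h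
  push Not at h
  obtain ⟨X, ε, hε, hX⟩ := h
  have hstep : ∀ F : Finset G, (1 + ε) * (F.card : ℝ) ≤ ((F * insert 1 X).card : ℝ) := by
    intro F
    rcases F.eq_empty_or_nonempty with rfl | hF
    · simp
    obtain ⟨g, hg, hle⟩ := hX F hF
    have hpos : (0 : ℝ) < F.card := by exact_mod_cast hF.card_pos
    rw [le_div_iff₀ hpos] at hle
    have hcard : (F.image (· * g)).card = F.card :=
      Finset.card_image_of_injective _ (mul_left_injective g)
    have h1 : (F \ F.image (· * g)).card = (F.image (· * g) \ F).card :=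
      Finset.card_sdiff_comm hcard.symm
    have h2 : (F ∪ F.image (· * g)).card ≤ (F * insert 1 X).card := by
      apply Finset.card_le_card
      intro y hy
      rcases Finset.mem_union.1 hy with hy | hy
      · exact Finset.mem_mul.2 ⟨y, hy, 1, by simp, by simp⟩
      · obtain ⟨x, hx, rfl⟩ := Finset.mem_image.1 hy
        exact Finset.mem_mul.2 ⟨x, hx, g, by simp [hg], rfl⟩
    have h3 : (F.image (· * g) \ F).card + F.card = (F ∪ F.image (· * g)).card := by
      rw [Finset.card_sdiff_add_card, Finset.union_comm]
    have h4 : ((F \ F.image (· * g)).card : ℝ) + F.card ≤ ((F * insert 1 X).card : ℝ) := by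
      rw [h1]; exact_mod_cast h3.trans_le h2
    linarith
  have hiter : ∀ (k : ℕ) (F : Finset G),
      (1 + ε) ^ k * (F.card : ℝ) ≤ ((F * (insert 1 X) ^ k).card : ℝ) := by
    intro k
    induction k with
    | zero => intro F; simp
    | succ k ih =>
      intro F
      rw [pow_succ (insert 1 X), ← mul_assoc]
      refine le_trans ?_ (hstep _)
      have := mul_le_mul_of_nonneg_left (ih F) (show (0 : ℝ) ≤ 1 + ε by linarith)
      calc _ = (1 + ε) * ((1 + ε) ^ k * (F.card : ℝ)) := by ring
        _ ≤ _ := this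
  obtain ⟨k, hk⟩ := pow_unbounded_of_one_lt (2 : ℝ) (show 1 < 1 + ε by linarith)
  refine ⟨(insert 1 X) ^ k, Finset.one_mem_pow (by simp), fun F => ?_⟩
  have h1 := hiter k F
  have h2 : (2 : ℝ) * F.card ≤ (1 + ε) ^ k * F.card :=
    mul_le_mul_of_nonneg_right hk.le (by positivity)
  exact_mod_cast h2.trans h1

open scoped Pointwise in
theorem bij_aux {G : Type*} [Group G] (T : Finset G) (h1 : (1 : G) ∈ T)
    (hT : ∀ F : Finset G, 2 * F.card ≤ (F * T).card) :
    ∃ f : G × Bool → G, Function.Bijective f ∧ ∀ p, p.1⁻¹ * f p ∈ T := by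
  obtain ⟨f, hf, hfT⟩ := (Finset.all_card_le_biUnion_card_iff_exists_injective
    (fun p : G × Bool => T.image (p.1 * ·))).1 (by
      intro s
      have hs : s.card ≤ 2 * (s.image Prod.fst).card := by
        have : s ⊆ (s.image Prod.fst) ×ˢ (Finset.univ : Finset Bool) := by
          intro p hp
          simp only [Finset.mem_product, Finset.mem_univ, and_true]
          exact Finset.mem_image_of_mem _ hp
        have := Finset.card_le_card this
        rw [Finset.card_product] at this
        simp at this
        omega
      refine hs.trans ((hT _).trans (Finset.card_le_card ?_))
      intro y hy
      obtain ⟨x, hx, t, ht, rfl⟩ := Finset.mem_mul.1 hy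
      obtain ⟨p, hp, rfl⟩ := Finset.mem_image.1 hx
      exact Finset.mem_biUnion.2 ⟨p, hp, Finset.mem_image_of_mem _ ht⟩)
  refine Function.Embedding.schroeder_bernstein_of_rel (g := fun y => (y, false)) hf
    (fun a b hab => (Prod.ext_iff.1 hab).1) (fun p y => p.1⁻¹ * y ∈ T) ?_ ?_
  · intro p
    obtain ⟨t, ht, he⟩ := Finset.mem_image.1 (hfT p)
    simp only [← he, inv_mul_cancel_left]
    exact ht
  · intro b; simpa using h1

theorem image_aux {G : Type*} [Group G] (a : G → G) (t : G) :
    (· * t⁻¹) '' {y | ∃ x, a x = y ∧ y = x * t} = {x | a x = x * t} := by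
  ext z
  constructor
  · rintro ⟨y, ⟨x, h1, h2⟩, rfl⟩
    subst h2
    simpa using h1
  · intro hz
    exact ⟨z * t, ⟨z, hz, rfl⟩, by simp⟩

/-- If a group does not satisfy the Følner condition, then it is paradoxical. -/
theorem paradoxical_of_not_folnerCondition {G : Type*} [Group G]
    (h : ¬ FolnerCondition G) : IsParadoxicalGroup G := by
  obtain ⟨T, h1, hT⟩ := expand_aux h
  obtain ⟨f, ⟨hinj, hsurj⟩, hfT⟩ := bij_aux T h1 hT
  let t : Fin T.card → G := fun i => (T.equivFin.symm i : G)
  have htinj : Function.Injective t :=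
    Subtype.val_injective.comp T.equivFin.symm.injective
  have htsurj : ∀ x ∈ T, ∃ i, t i = x := fun x hx => ⟨T.equivFin ⟨x, hx⟩, by simp [t]⟩
  have hex : ∀ b x, ∃ i, f (x, b) = x * t i := by
    intro b x
    obtain ⟨i, hi⟩ := htsurj _ (hfT (x, b))
    exact ⟨i, by simp [hi]⟩
  have hdisj : ∀ b i j, i ≠ j → Disjoint {y | ∃ x, f (x, b) = y ∧ y = x * t i}
      {y | ∃ x, f (x, b) = y ∧ y = x * t j} := by
    intro b i j hij
    rw [Set.disjoint_left]
    rintro y ⟨x, hx, hx'⟩ ⟨z, hz, hz'⟩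
    have : x = z := (Prod.ext_iff.1 (hinj (hx.trans hz.symm))).1
    subst this
    exact hij (htinj (mul_left_cancel (hx'.symm.trans hz')))
  have hdisj' : ∀ b i j, i ≠ j → Disjoint {x | f (x, b) = x * t i}
      {x | f (x, b) = x * t j} := by
    intro b i j hij
    rw [Set.disjoint_left]
    intro x hx hz
    exact hij (htinj (mul_left_cancel (Eq.trans (Eq.symm hx) hz)))
  have hcov : ∀ b, (⋃ i, {x | f (x, b) = x * t i}) = Set.univ := by
    intro b
    exact Set.eq_univ_of_forall fun x => Set.mem_iUnion.2 (hex b x)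
  refine ⟨T.card, T.card, fun i => {y | ∃ x, f (x, false) = y ∧ y = x * t i},
    fun i => {y | ∃ x, f (x, true) = y ∧ y = x * t i}, fun i => (t i)⁻¹, fun i => (t i)⁻¹,
    hdisj false, hdisj true, ?_, ?_, ?_, ?_, ?_, ?_⟩
  · intro i j
    rw [Set.disjoint_left]
    rintro y ⟨x, hx, -⟩ ⟨z, hz, -⟩
    have := (Prod.ext_iff.1 (hinj (hx.trans hz.symm))).2
    simp at this
  · refine Set.eq_univ_of_forall fun y => ?_
    obtain ⟨⟨x, b⟩, rfl⟩ := hsurj y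
    obtain ⟨i, hi⟩ := hex b x
    cases b
    · exact Or.inl (Set.mem_iUnion.2 ⟨i, x, rfl, hi⟩)
    · exact Or.inr (Set.mem_iUnion.2 ⟨i, x, rfl, hi⟩)
  · simp only [image_aux (fun x => f (x, false))]
    exact hcov false
  · simp only [image_aux (fun x => f (x, true))]
    exact hcov true
  · simp only [image_aux (fun x => f (x, false))]
    exact hdisj' false
  · simp only [image_aux (fun x => f (x, true))]
    exact hdisj' true
end

section
/- Suppose a group G has a Følner net. Then every continuous affine action of G on a nonempty convex compact subset C of a Hausdorff topological real vector space E has a fixed point: there exists c ∈ C with c·g = c for all g ∈ G. (Combined with the Følner characterisation, this is the Markov–Kakutani/Day fixed point property of amenable groups.) -/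
open scoped Classical

universe u v

lemma exists_avg {ι : Type*} {E : Type*} [AddCommGroup E] [Module ℝ E]
    {C : Set E} (hC : Convex ℝ C) (s : Finset ι) (hs : s.Nonempty) (p : ι → C) :
    ∃ z : C, (s.card : ℝ) • (z : E) = ∑ i ∈ s, (p i : E) := by
  have hn : (s.card : ℝ) ≠ 0 := by exact_mod_cast hs.card_pos.ne'
  refine ⟨⟨∑ i ∈ s, (s.card : ℝ)⁻¹ • (p i : E), ?_⟩, ?_⟩
  · apply hC.sum_mem
    · intro i _
      positivity
    · simp [hn]
    · intro i _
      exact (p i).2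
  · simp only [← Finset.smul_sum]
    rw [smul_inv_smul₀ hn]

lemma affine_avg {ι : Type*} {E : Type*} [AddCommGroup E] [Module ℝ E]
    {C : Set E} (hC : Convex ℝ C) (φ : C → C)
    (haff : ∀ (x y z : C) (t : ℝ), 0 ≤ t → t ≤ 1 →
      (z : E) = t • (x : E) + (1 - t) • (y : E) →
      ((φ z : E) = t • ((φ x : E)) + (1 - t) • ((φ y : E))))
    (p : ι → C) (s : Finset ι) (hs : s.Nonempty) :
    ∀ z : C, (s.card : ℝ) • (z : E) = ∑ i ∈ s, (p i : E) →
      (s.card : ℝ) • (φ z : E) = ∑ i ∈ s, (φ (p i) : E) := by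
  induction hs using Finset.Nonempty.cons_induction with
  | singleton a =>
    intro z hz
    have : z = p a := by
      apply Subtype.ext
      simpa using hz
    simp [this]
  | cons a s ha hs ih =>
    intro z hz
    obtain ⟨w, hw⟩ := exists_avg hC s hs p
    have ihw := ih w hw
    rw [Finset.sum_cons, Finset.card_cons] at hz ⊢
    rw [← hw] at hz
    rw [← ihw]
    push_cast at hz ⊢
    have hn : (0 : ℝ) ≤ (s.card : ℝ) := by positivity
    generalize (s.card : ℝ) = n at hz hn
    have hn1 : n + 1 ≠ 0 := by positivity
    have ht : 1 - (n + 1)⁻¹ = (n + 1)⁻¹ * n := by field_simp; ring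
    have key := haff (p a) w z (n + 1)⁻¹ (by positivity)
      (inv_le_one_of_one_le₀ (by linarith)) (by
        rw [ht, mul_smul, ← smul_add, ← hz, inv_smul_smul₀ hn1])
    rw [key, ht, mul_smul, ← smul_add, smul_inv_smul₀ hn1]

lemma exists_diff {G : Type*} [Group G] {E : Type*} [AddCommGroup E] [Module ℝ E]
    {C : Set E} (hC : Convex ℝ C) (act : G → C → C)
    (hmul : ∀ (g g' : G) (x : C), act (g * g') x = act g' (act g x))
    (haffine : ∀ (g : G) (x y z : C) (t : ℝ), 0 ≤ t → t ≤ 1 →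
      (z : E) = t • (x : E) + (1 - t) • (y : E) →
      ((act g z : E) = t • ((act g x : E)) + (1 - t) • ((act g y : E))))
    (x : C) (F : Finset G) (hF : F.Nonempty) (c : C)
    (hc : (F.card : ℝ) • (c : E) = ∑ f ∈ F, (act f x : E)) (g : G) :
    ∃ a b : C, (act g c : E) - c =
      (((F \ F.image (· * g)).card : ℝ) / (F.card : ℝ)) • ((a : E) - b) := by
  have hn : (F.card : ℝ) ≠ 0 := by exact_mod_cast hF.card_pos.ne'
  have h1 := affine_avg hC (act g) (haffine g) (fun f => act f x) F hF c hc
  have h2 : ∑ f ∈ F, (act g (act f x) : E) = ∑ h ∈ F.image (· * g), (act h x : E) := by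
    rw [Finset.sum_image (fun a _ b _ h => mul_right_cancel h)]
    simp only [hmul]
  have hcard : (F.image (· * g)).card = F.card :=
    Finset.card_image_of_injective _ (mul_left_injective g)
  have hcc : (F.image (· * g) \ F).card = (F \ F.image (· * g)).card :=
    Finset.card_sdiff_comm hcard
  have h3 : (F.card : ℝ) • ((act g c : E) - c) =
      ∑ h ∈ F.image (· * g) \ F, (act h x : E) - ∑ h ∈ F \ F.image (· * g), (act h x : E) := by
    rw [smul_sub, h1, hc, h2, Finset.sum_sdiff_sub_sum_sdiff]
  rcases (F \ F.image (· * g)).eq_empty_or_nonempty with he | hne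
  · refine ⟨x, x, ?_⟩
    have he' : F.image (· * g) \ F = ∅ := by
      rw [← Finset.card_eq_zero, hcc, he, Finset.card_empty]
    rw [he, he'] at h3
    simp only [Finset.sum_empty, sub_self] at h3
    rw [sub_self, smul_zero]
    exact (smul_eq_zero.mp h3).resolve_left hn
  · have hne' : (F.image (· * g) \ F).Nonempty := by
      rw [← Finset.card_pos, hcc]
      exact hne.card_pos
    obtain ⟨a, ha⟩ := exists_avg hC _ hne' (fun h => act h x)
    obtain ⟨b, hb⟩ := exists_avg hC _ hne (fun h => act h x)
    refine ⟨a, b, ?_⟩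
    rw [← ha, ← hb, hcc, ← smul_sub] at h3
    rw [div_eq_inv_mul, mul_smul, ← h3, inv_smul_smul₀ hn]

/-- If a group `G` has a Følner net, then every continuous affine (right) action of `G`
on a nonempty convex compact subset `C` of a Hausdorff topological real vector space `E`
has a fixed point. Here `act g : C → C` denotes the map `x ↦ x·g`, so that
`x·1 = x` and `x·(gg') = (x·g)·g'`, each `act g` is continuous, and `act g` is affine:
it preserves convex combinations (computed in `E`). -/
theorem fixedPoint_of_folnerNet {G : Type u} [Group G]
    (hFolner : ∃ (I : Type u) (_ : Preorder I), Nonempty I ∧ IsDirected I (· ≤ ·) ∧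
      ∃ F : I → Finset G, (∀ i, (F i).Nonempty) ∧
        ∀ g : G, Filter.Tendsto
          (fun i => (((F i) \ (F i).image (· * g)).card : ℝ) / ((F i).card : ℝ))
          Filter.atTop (nhds 0))
    {E : Type v} [AddCommGroup E] [Module ℝ E] [TopologicalSpace E] [T2Space E]
    [IsTopologicalAddGroup E] [ContinuousSMul ℝ E]
    (C : Set E) (hCne : C.Nonempty) (hCconv : Convex ℝ C) (hCcomp : IsCompact C)
    (act : G → C → C)
    (hone : ∀ x : C, act 1 x = x)
    (hmul : ∀ (g g' : G) (x : C), act (g * g') x = act g' (act g x))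
    (hcont : ∀ g : G, Continuous (act g))
    (haffine : ∀ (g : G) (x y z : C) (t : ℝ), 0 ≤ t → t ≤ 1 →
      (z : E) = t • (x : E) + (1 - t) • (y : E) →
      ((act g z : E) = t • ((act g x : E)) + (1 - t) • ((act g y : E)))) :
    ∃ c : C, ∀ g : G, act g c = c := by
  obtain ⟨I, _, hI, hdir, F, hF, hlim⟩ := hFolner
  obtain ⟨x0, hx0⟩ := hCne
  have : CompactSpace C := isCompact_iff_compactSpace.mp hCcomp
  let x : C := ⟨x0, hx0⟩
  choose c hc using fun i => exists_avg hCconv (F i) (hF i) (fun f => act f x)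
  let U : Ultrafilter I := Ultrafilter.of Filter.atTop
  have hU : (U : Filter I) ≤ Filter.atTop := Ultrafilter.of_le _
  have conv : ∀ a : I → C, ∃ y : C, Filter.Tendsto a U (nhds y) := by
    intro a
    exact ⟨(U.map a).lim, (U.map a).le_nhds_lim⟩
  obtain ⟨y, hy⟩ := conv c
  refine ⟨y, fun g => ?_⟩
  choose a b hab using fun i =>
    exists_diff hCconv act hmul haffine x (F i) (hF i) (c i) (hc i) g
  obtain ⟨α, hα⟩ := conv a
  obtain ⟨β, hβ⟩ := conv b
  have cs : Continuous (Subtype.val : C → E) := continuous_subtype_val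
  have hl := (((cs.comp (hcont g)).tendsto y).comp hy).sub ((cs.tendsto y).comp hy)
  have hr := ((hlim g).mono_left hU).smul (((cs.tendsto α).comp hα).sub ((cs.tendsto β).comp hβ))
  have heq := tendsto_nhds_unique (hl.congr hab) hr
  rw [zero_smul] at heq
  exact Subtype.ext (sub_eq_zero.mp heq)
end
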